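/- Let K ⊂ ℝ^{n+1} be a smooth, strictly convex body with the origin in its interior, with support function h, radial function r = |X| where X = Dh, Gauss curvature 𝒦, and measure dV = h σ_n dμ. Let φ: (0,∞) → (0,∞) be C¹-smooth and set f = φ(r). Then ∫ f² ⟨ ∇̄ log(h^{n+2}/𝒦) − (r (log φ)'(r))² ∇̄ log r , h X ⟩ dV ≤ n |∫ f X dV|² / ∫ dV, where |∫ f X dV| is the Euclidean norm of the vector ∫ f X dV ∈ ℝ^{n+1}. -/

import Mathlib

open MeasureTheory Matrix Metric
open scoped RealInnerProductSpace

noncomputable section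

/-- Euclidean space `ℝ^{n+1}`. -/
abbrev Euc (n : ℕ) : Type := EuclideanSpace ℝ (Fin (n + 1))

/-- The Euclidean Hessian matrix of `H : ℝ^{n+1} → ℝ` at `x`. -/
def ehess (n : ℕ) (H : Euc n → ℝ) (x : Euc n) : Matrix (Fin (n + 1)) (Fin (n + 1)) ℝ :=
  Matrix.of fun i j =>
    fderiv ℝ (fun y => fderiv ℝ H y (EuclideanSpace.single j 1)) x (EuclideanSpace.single i 1)

/-- For the 1-homogeneous extension `H` of the support function `h` and `x ∈ S^n`, the matrix
`D²H(x) + h(x)·x xᵀ`.  Its restriction to the tangent space `x^⊥ = T_x S^n` is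
`A[h] = ∇̄²h + h ḡ`, and `x` is an eigenvector with eigenvalue `h(x)`. -/
def bmat (n : ℕ) (H : Euc n → ℝ) (x : Euc n) : Matrix (Fin (n + 1)) (Fin (n + 1)) ℝ :=
  ehess n H x + Matrix.of fun i j => H x * (x i * x j)

/-- `σ_n = det A[h] = det(∇̄²h + h ḡ)/det ḡ`, computed as `det(bmat)/h`. -/
def sigman (n : ℕ) (H : Euc n → ℝ) (x : Euc n) : ℝ :=
  Matrix.det (bmat n H x) / H x

/-- The Gauss curvature `𝒦 = 1/σ_n`. -/
def gaussCurv (n : ℕ) (H : Euc n → ℝ) (x : Euc n) : ℝ := (sigman n H x)⁻¹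

/-- The round (spherical) gradient `∇̄f` at `x ∈ S^n`: the Euclidean gradient of the
0-homogeneous extension `y ↦ f(y/‖y‖)`.  It depends only on `f|_{S^n}` and lies in `T_x S^n`. -/
def sphGrad (n : ℕ) (f : Euc n → ℝ) (x : Euc n) : Euc n :=
  gradient (fun y => f (‖y‖⁻¹ • y)) x

/-- The function `log (h^{n+2}/𝒦)` (as a function of `y`; on the sphere it agrees with the
centro-affine expression appearing in the paper). -/
def logQ (n : ℕ) (H : Euc n → ℝ) (y : Euc n) : ℝ :=
  Real.log ((H y) ^ (n + 2) / gaussCurv n H y)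

/-- The centro-affine inner product `g(∇f, ∇u) = h ⟨A[h]⁻¹ ∇̄f, ∇̄u⟩` of the `g`-gradients of
`f` and `u`, where `g = A[h]/h` is the centro-affine metric. -/
def gInner (n : ℕ) (H f u : Euc n → ℝ) (x : Euc n) : ℝ :=
  H x * ∑ i, (bmat n H x)⁻¹.mulVec (fun j => sphGrad n f x j) i * sphGrad n u x i

/-- The squared centro-affine norm `|∇f|_g²` of the `g`-gradient of `f`. -/
def gNormSq (n : ℕ) (H f : Euc n → ℝ) (x : Euc n) : ℝ := gInner n H f f x

/-- The centro-affine Laplacian `Δf = div_g(∇ f)` (with respect to the centro-affine connection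
`∇` induced by the centro-affine normal `ξ = X`, and the centro-affine metric `g = A[h]/h`),
computed via the identity `Δf = tr_g(A[hf]/h) - n f`, i.e.
`Δf = tr(B[h]⁻¹ B[hf]) - (n+1) f` where `B[u] = D²ũ + u·x xᵀ` for the 1-homogeneous
extension `ũ` of `u`. -/
def caLap (n : ℕ) (H f : Euc n → ℝ) (x : Euc n) : ℝ :=
  Matrix.trace ((bmat n H x)⁻¹ * bmat n (fun y => H y * f (‖y‖⁻¹ • y)) x) - (n + 1) * f x

/-- The spherical Lebesgue measure on `S^n ⊂ ℝ^{n+1}` (up to a positive constant). -/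
def sphMeasure (n : ℕ) : Measure (sphere (0 : Euc n) 1) :=
  (volume : Measure (Euc n)).toSphere

/-- The density of the cone-volume-type measure `dV = h σ_n dμ` with respect to the spherical
Lebesgue measure. -/
def volDens (n : ℕ) (H : Euc n → ℝ) (x : Euc n) : ℝ := H x * sigman n H x

/-!
Write `X = ∇H` for the one-homogeneous extension `H` of `h`, and `A = D²H`. The inequality is an
infinitesimal form of the Brunn–Minkowski inequality, which in turn follows from
Prékopa–Leindler.

The map `T = H ∇H` is injective off the origin and has Jacobian `H^{n+1} dV/dμ` on the sphere, so
in polar coordinates the volume of `{T(s u) : 0 < s < R(u)/H(u)}` is a multiple of `∫ R^{n+1} dV`.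
If `dF = ⟨A v, ·⟩` on the sphere, then for fixed `η > 0` and small `t` the set belonging to
`R_t = 1 + tF - (t²/2)(H⟨A v, v⟩ + η)` lies in the Wulff shape of `H(1 + tF)`. Midpoints of the
Wulff shapes of `H(1 + tF)` and `H(1 - tF)` lie in the Wulff shape of `H`, hence
`∫ R_t^{n+1} dV · ∫ R_{-t}^{n+1} dV ≤ (∫ dV)²`; the second-order term in `t`, as `η → 0`, is the
Poincaré inequality `n ∫ F² dV - ∫ H⟨A v, v⟩ dV ≤ n (∫ F dV)² / ∫ dV`.

Applied to the coordinates of `φ(r) X` and summed, it bounds an integral which differs from the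
left-hand side of the theorem by that of the divergence of the field `φ(r)² h X dV/dμ`, extended
`(-n)`-homogeneously; the integral of such a divergence over the sphere vanishes.
-/

section PrekopaLeindler

open scoped ENNReal Pointwise

lemma volume_add_volume_le_volume_add_of_isCompact {K L : Set ℝ} (hK : IsCompact K)
    (hL : IsCompact L) (hK₀ : K.Nonempty) (hL₀ : L.Nonempty) :
    volume K + volume L ≤ volume (K + L) := by
  -- The translates `K + min L` and `max K + L` lie in `K + L` and meet in at most one point.
  have hsub : (· + sInf L) '' K ∪ (sSup K + ·) '' L ⊆ K + L := by
    rintro _ (⟨x, hx, rfl⟩ | ⟨y, hy, rfl⟩)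
    · exact Set.add_mem_add hx (hL.sInf_mem hL₀)
    · exact Set.add_mem_add (hK.sSup_mem hK₀) hy
  have hdisj : AEDisjoint volume ((· + sInf L) '' K) ((sSup K + ·) '' L) := by
    refine measure_mono_null (t := {sSup K + sInf L}) ?_ (by simp)
    rintro _ ⟨⟨x, hx, rfl⟩, ⟨y, hy, hxy⟩⟩
    have hx_le : x ≤ sSup K := le_csSup hK.bddAbove hx
    have hy_ge : sInf L ≤ y := csInf_le hL.bddBelow hy
    simp only [Set.mem_singleton_iff] at *
    linarith
  calc volume K + volume L
      = volume ((· + sInf L) '' K ∪ (sSup K + ·) '' L) := by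
        rw [measure_union₀ (hL.image (by fun_prop)).measurableSet.nullMeasurableSet hdisj]
        simp
    _ ≤ volume (K + L) := measure_mono hsub

lemma volume_add_volume_le_volume_add {A B : Set ℝ} (hA : MeasurableSet A)
    (hB : MeasurableSet B) (hA₀ : A.Nonempty) (hB₀ : B.Nonempty) :
    volume A + volume B ≤ volume (A + B) := by
  obtain ⟨a, ha⟩ := hA₀
  obtain ⟨b, hb⟩ := hB₀
  simp only [hA.measure_eq_iSup_isCompact, hB.measure_eq_iSup_isCompact, iSup_and']
  refine ENNReal.biSup_add_biSup_le' ⟨∅, by simp⟩ ⟨∅, by simp⟩ fun K hK L hL ↦ ?_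
  calc volume K + volume L
      ≤ volume (insert a K) + volume (insert b L) := by
        gcongr <;> exact Set.subset_insert _ _
    _ ≤ volume (insert a K + insert b L) :=
        volume_add_volume_le_volume_add_of_isCompact (hK.2.insert a) (hL.2.insert b)
          (Set.insert_nonempty _ _) (Set.insert_nonempty _ _)
    _ ≤ volume (A + B) := measure_mono <|
        Set.add_subset_add (Set.insert_subset ha hK.1) (Set.insert_subset hb hL.1)

lemma lintegral_eq_lintegral_meas_ofReal_lt {α : Type*} [MeasurableSpace α] (μ : Measure α)
    {f : α → ℝ≥0∞} (hf : Measurable f) (hf_top : ∀ x, f x ≠ ∞) :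
    ∫⁻ x, f x ∂μ = ∫⁻ t in Set.Ioi (0 : ℝ), μ {x | ENNReal.ofReal t < f x} := by
  have h := lintegral_eq_lintegral_meas_lt μ (f := fun x ↦ (f x).toReal)
    (.of_forall fun _ ↦ ENNReal.toReal_nonneg) hf.ennreal_toReal.aemeasurable
  simp only [ENNReal.ofReal_toReal (hf_top _)] at h
  rw [h]
  refine setLIntegral_congr_fun measurableSet_Ioi fun t ht ↦ ?_
  simp only [ENNReal.ofReal_lt_iff_lt_toReal (le_of_lt ht) (hf_top _)]

lemma ennreal_geom_mean_le_arith_mean {p q : ℝ} (hp : 0 < p) (hq : 0 < q) (hpq : p + q = 1)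
    (a b : ℝ≥0∞) : a ^ p * b ^ q ≤ ENNReal.ofReal p * a + ENNReal.ofReal q * b := by
  rcases eq_or_ne a ∞ with rfl | ha
  · simp [ENNReal.mul_top, hp]
  rcases eq_or_ne b ∞ with rfl | hb
  · simp [ENNReal.mul_top, hq]
  lift a to NNReal using ha
  lift b to NNReal using hb
  rw [← ENNReal.coe_rpow_of_nonneg _ hp.le, ← ENNReal.coe_rpow_of_nonneg _ hq.le,
    ENNReal.ofReal, ENNReal.ofReal]
  norm_cast
  have := NNReal.geom_mean_le_arith_mean2_weighted p.toNNReal q.toNNReal a b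
    (by rw [← Real.toNNReal_add hp.le hq.le, hpq, Real.toNNReal_one])
  simpa [hp.le, hq.le] using this

lemma lintegral_eq_iSup_lintegral_min_natCast {α : Type*} [MeasurableSpace α] (μ : Measure α)
    {f : α → ℝ≥0∞} (hf : Measurable f) : ∫⁻ x, f x ∂μ = ⨆ k : ℕ, ∫⁻ x, min (f x) k ∂μ := by
  rw [← lintegral_iSup (f := fun (k : ℕ) x ↦ min (f x) k) (fun k ↦ by fun_prop)
    fun i j hij x ↦ min_le_min le_rfl (by exact_mod_cast hij)]
  refine lintegral_congr fun x ↦ ?_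
  simp only [← inf_iSup_eq, ENNReal.iSup_natCast, inf_top_eq]

variable {p q : ℝ}

lemma volume_le_volume_of_weighted_add_mem (hp : 0 < p) (hq : 0 < q) {A B S : Set ℝ}
    (hA : MeasurableSet A) (hB : MeasurableSet B) (hA₀ : A.Nonempty) (hB₀ : B.Nonempty)
    (hS : ∀ a ∈ A, ∀ b ∈ B, p * a + q * b ∈ S) :
    ENNReal.ofReal p * volume A + ENNReal.ofReal q * volume B ≤ volume S := by
  have hsub : p • A + q • B ⊆ S := by
    rintro _ ⟨_, ⟨a, ha, rfl⟩, _, ⟨b, hb, rfl⟩, rfl⟩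
    exact hS a ha b hb
  have hle := volume_add_volume_le_volume_add (hA.const_smul₀ p) (hB.const_smul₀ q)
    hA₀.smul_set hB₀.smul_set
  simp only [Measure.addHaar_smul, Module.finrank_self, pow_one, abs_of_pos hp, abs_of_pos hq]
    at hle
  exact hle.trans (measure_mono hsub)

lemma weighted_lintegral_le_lintegral_of_iSup_eq_one (hp : 0 < p) (hq : 0 < q)
    (hpq : p + q = 1) {f g h : ℝ → ℝ≥0∞} (hf : Measurable f) (hg : Measurable g)
    (hh : Measurable h) (hf_sup : ⨆ x, f x = 1) (hg_sup : ⨆ x, g x = 1)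
    (hle : ∀ x y, f x ^ p * g y ^ q ≤ h (p * x + q * y)) :
    ENNReal.ofReal p * (∫⁻ x, f x) + ENNReal.ofReal q * ∫⁻ x, g x ≤ ∫⁻ x, h x := by
  have hf_le x : f x ≤ 1 := hf_sup ▸ le_iSup f x
  have hg_le x : g x ≤ 1 := hg_sup ▸ le_iSup g x
  have level (t : ℝ) (ht : 0 < t) :
      ENNReal.ofReal p * volume {x | ENNReal.ofReal t < f x}
        + ENNReal.ofReal q * volume {x | ENNReal.ofReal t < g x}
      ≤ volume {x | ENNReal.ofReal t < min (h x) 1} := by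
    rcases lt_or_ge t 1 with ht1 | ht1
    · have ht1' : ENNReal.ofReal t < 1 := by simpa using ht1
      refine volume_le_volume_of_weighted_add_mem hp hq (measurableSet_lt measurable_const hf)
        (measurableSet_lt measurable_const hg) (lt_iSup_iff.1 (ht1'.trans_eq hf_sup.symm))
        (lt_iSup_iff.1 (ht1'.trans_eq hg_sup.symm)) fun x hx y hy ↦ lt_min ?_ ht1'
      calc ENNReal.ofReal t = ENNReal.ofReal t ^ p * ENNReal.ofReal t ^ q := by
            rw [← ENNReal.rpow_add _ _ (by simpa using ht) (by simp), hpq, ENNReal.rpow_one]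
        _ < f x ^ p * g y ^ q :=
            ENNReal.mul_lt_mul (ENNReal.rpow_lt_rpow hx hp) (ENNReal.rpow_lt_rpow hy hq)
        _ ≤ h (p * x + q * y) := hle x y
    · have hempty (u : ℝ → ℝ≥0∞) (hu : ∀ x, u x ≤ 1) : {x | ENNReal.ofReal t < u x} = ∅ :=
        Set.eq_empty_iff_forall_notMem.2 fun x ↦
          not_lt.2 ((hu x).trans (ENNReal.one_le_ofReal.2 ht1))
      simp [hempty f hf_le, hempty g hg_le]
  calc ENNReal.ofReal p * (∫⁻ x, f x) + ENNReal.ofReal q * ∫⁻ x, g x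
      ≤ ∫⁻ x, min (h x) 1 := by
        have layer_cake {u : ℝ → ℝ≥0∞} (hu : Measurable u) (hu_le : ∀ x, u x ≤ 1) :=
          lintegral_eq_lintegral_meas_ofReal_lt volume hu
            fun x ↦ ne_top_of_le_ne_top ENNReal.one_ne_top (hu_le x)
        rw [layer_cake hf hf_le, layer_cake hg hg_le,
          layer_cake (hh.min measurable_const) fun x ↦ min_le_right _ _,
          ← lintegral_const_mul' _ _ (by simp), ← lintegral_const_mul' _ _ (by simp),
          ← lintegral_add_left']
        · exact setLIntegral_mono' measurableSet_Ioi level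
        · refine (Antitone.measurable fun s t hst ↦ ?_).aemeasurable
          gcongr
    _ ≤ ∫⁻ x, h x := lintegral_mono fun x ↦ min_le_left _ _

lemma prekopaLeindler_real_of_iSup_ne_top (hp : 0 < p) (hq : 0 < q) (hpq : p + q = 1)
    {f g h : ℝ → ℝ≥0∞} (hf : Measurable f) (hg : Measurable g) (hh : Measurable h)
    (hf_top : ⨆ x, f x ≠ ∞) (hg_top : ⨆ x, g x ≠ ∞)
    (hle : ∀ x y, f x ^ p * g y ^ q ≤ h (p * x + q * y)) :
    (∫⁻ x, f x) ^ p * (∫⁻ x, g x) ^ q ≤ ∫⁻ x, h x := by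
  set a := ⨆ x, f x with ha
  set b := ⨆ x, g x with hb
  rcases eq_or_ne a 0 with ha0 | ha0
  · simp [show f = 0 from funext (ENNReal.iSup_eq_zero.1 ha0), hp]
  rcases eq_or_ne b 0 with hb0 | hb0
  · simp [show g = 0 from funext (ENNReal.iSup_eq_zero.1 hb0), hq]
  set c := a ^ p * b ^ q with hc
  have hc0 : c ≠ 0 := by simp [hc, ha0, hb0, hf_top, hg_top]
  have hc_top : c ≠ ∞ := ENNReal.mul_ne_top
    (ENNReal.rpow_ne_top_of_nonneg hp.le hf_top) (ENNReal.rpow_ne_top_of_nonneg hq.le hg_top)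
  have scale (u v : ℝ≥0∞) : (u / a) ^ p * (v / b) ^ q = u ^ p * v ^ q / c := by
    simp only [hc, ENNReal.div_rpow_of_nonneg _ _ hp.le, ENNReal.div_rpow_of_nonneg _ _ hq.le]
    exact ENNReal.mul_div_mul_comm (.inr (ENNReal.rpow_ne_top_of_nonneg hq.le hg_top))
      (.inl (ENNReal.rpow_ne_top_of_nonneg hp.le hf_top)) |>.symm
  have normalized := weighted_lintegral_le_lintegral_of_iSup_eq_one hp hq hpq
    (hf.div_const a) (hg.div_const b) (hh.div_const c)
    (by rw [← ENNReal.iSup_div, ← ha, ENNReal.div_self ha0 hf_top])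
    (by rw [← ENNReal.iSup_div, ← hb, ENNReal.div_self hb0 hg_top])
    fun x y ↦ (scale _ _).trans_le (ENNReal.div_le_div_right (hle x y) c)
  have := (ennreal_geom_mean_le_arith_mean hp hq hpq _ _).trans normalized
  simp only [div_eq_mul_inv _ a, div_eq_mul_inv _ b, div_eq_mul_inv _ c, lintegral_mul_const _ hf,
    lintegral_mul_const _ hg, lintegral_mul_const _ hh] at this
  simp only [← div_eq_mul_inv, scale] at this
  rwa [ENNReal.div_le_iff hc0 hc_top, ENNReal.div_mul_cancel hc0 hc_top] at this

lemma prekopaLeindler_real (hp : 0 < p) (hq : 0 < q) (hpq : p + q = 1)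
    {f g h : ℝ → ℝ≥0∞} (hf : Measurable f) (hg : Measurable g) (hh : Measurable h)
    (hle : ∀ x y, f x ^ p * g y ^ q ≤ h (p * x + q * y)) :
    (∫⁻ x, f x) ^ p * (∫⁻ x, g x) ^ q ≤ ∫⁻ x, h x := by
  have iSup_rpow {r : ℝ} (hr : 0 < r) (u : ℕ → ℝ≥0∞) : (⨆ k, u k) ^ r = ⨆ k, u k ^ r :=
    (ENNReal.orderIsoRpow r hr).map_iSup u
  have iSup_min_ne_top (u : ℝ → ℝ≥0∞) (k : ℕ) : ⨆ x, min (u x) k ≠ ∞ :=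
    ne_top_of_le_ne_top (ENNReal.natCast_ne_top k) (iSup_le fun x ↦ min_le_right _ _)
  rw [lintegral_eq_iSup_lintegral_min_natCast _ hf, lintegral_eq_iSup_lintegral_min_natCast _ hg,
    iSup_rpow hp, iSup_rpow hq]
  refine ENNReal.mul_le_of_forall_lt fun u hu v hv ↦ ?_
  obtain ⟨i, hi⟩ := lt_iSup_iff.1 hu
  obtain ⟨j, hj⟩ := lt_iSup_iff.1 hv
  refine (mul_le_mul' hi.le hj.le).trans ?_
  refine prekopaLeindler_real_of_iSup_ne_top hp hq hpq (by fun_prop) (by fun_prop) hh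
    (iSup_min_ne_top f i) (iSup_min_ne_top g j) fun x y ↦ le_trans ?_ (hle x y)
  gcongr <;> exact min_le_left _ _

lemma measurable_finCons (n : ℕ) :
    Measurable fun z : ℝ × (Fin n → ℝ) ↦ (Fin.cons z.1 z.2 : Fin (n + 1) → ℝ) := by
  refine measurable_pi_iff.2 (Fin.cases ?_ fun j ↦ ?_)
  · simpa using measurable_fst
  · simp only [Fin.cons_succ]
    fun_prop

lemma lintegral_finCons {n : ℕ} {f : (Fin (n + 1) → ℝ) → ℝ≥0∞} (hf : Measurable f) :
    ∫⁻ x, f x = ∫⁻ s : ℝ, ∫⁻ y : Fin n → ℝ, f (Fin.cons s y) := by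
  have hmp := (volume_preserving_piFinSuccAbove (fun _ : Fin (n + 1) ↦ ℝ) 0).symm
  rw [← hmp.lintegral_comp hf, Measure.volume_eq_prod, lintegral_prod _ (by fun_prop)]
  simp only [MeasurableEquiv.piFinSuccAbove, MeasurableEquiv.symm_mk, MeasurableEquiv.coe_mk,
    Fin.insertNthEquiv_zero, Fin.consEquiv]
  rfl

theorem prekopaLeindler_pi (hp : 0 < p) (hq : 0 < q) (hpq : p + q = 1) (n : ℕ)
    {f g h : (Fin n → ℝ) → ℝ≥0∞} (hf : Measurable f) (hg : Measurable g) (hh : Measurable h)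
    (hle : ∀ x y, f x ^ p * g y ^ q ≤ h (p • x + q • y)) :
    (∫⁻ x, f x) ^ p * (∫⁻ x, g x) ^ q ≤ ∫⁻ x, h x := by
  induction n with
  | zero =>
    have hvol : (volume : Measure (Fin 0 → ℝ)) Set.univ = 1 := by simp [volume_pi]
    simp only [lintegral_unique, hvol, mul_one]
    exact (hle _ _).trans_eq (congrArg h (Subsingleton.elim _ _))
  | succ n ih =>
    have hcons := measurable_finCons n
    rw [lintegral_finCons hf, lintegral_finCons hg, lintegral_finCons hh]
    refine prekopaLeindler_real hp hq hpq (hf.comp hcons).lintegral_prod_right'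
      (hg.comp hcons).lintegral_prod_right' (hh.comp hcons).lintegral_prod_right' fun s t ↦ ?_
    have hslice (s : ℝ) : Measurable fun y : Fin n → ℝ ↦ (Fin.cons s y : Fin (n + 1) → ℝ) :=
      hcons.comp measurable_prodMk_left
    refine ih (hf.comp (hslice s)) (hg.comp (hslice t)) (hh.comp (hslice _)) fun x y ↦ ?_
    refine (hle _ _).trans_eq (congrArg h ?_)
    ext i
    cases i using Fin.cases <;> simp

theorem brunnMinkowski (hp : 0 < p) (hq : 0 < q) (hpq : p + q = 1) {n : ℕ}
    {A B S : Set (EuclideanSpace ℝ (Fin n))} (hA : MeasurableSet A) (hB : MeasurableSet B)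
    (hS : MeasurableSet S) (hABS : ∀ a ∈ A, ∀ b ∈ B, p • a + q • b ∈ S) :
    volume A ^ p * volume B ^ q ≤ volume S := by
  have hmp := (EuclideanSpace.volume_preserving_symm_measurableEquiv_toLp (Fin n)).symm
  have hmeas {U : Set (EuclideanSpace ℝ (Fin n))} (hU : MeasurableSet U) :
      Measurable fun x : Fin n → ℝ ↦ U.indicator (fun _ ↦ (1 : ℝ≥0∞)) (WithLp.toLp 2 x) :=
    (measurable_const.indicator hU).comp (by fun_prop)
  have hvol {U : Set (EuclideanSpace ℝ (Fin n))} (hU : MeasurableSet U) :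
      volume U = ∫⁻ x : Fin n → ℝ, U.indicator (fun _ ↦ 1) (WithLp.toLp 2 x) := by
    rw [← lintegral_indicator_one hU, ← hmp.lintegral_comp (measurable_one.indicator hU)]
    rfl
  rw [hvol hA, hvol hB, hvol hS]
  refine prekopaLeindler_pi hp hq hpq n (hmeas hA) (hmeas hB) (hmeas hS) fun x y ↦ ?_
  by_cases hx : WithLp.toLp 2 x ∈ A
  · by_cases hy : WithLp.toLp 2 y ∈ B
    · have hxy : p • WithLp.toLp 2 x + q • WithLp.toLp 2 y ∈ S := hABS _ hx _ hy
      simp [hx, hy, hxy]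
    · simp [hy, hq]
  · simp [hx, hp]

end PrekopaLeindler

section Polar

open scoped ENNReal

open Module

lemma integral_volumeIoiPow (n : ℕ) (a : ℝ → ℝ) :
    ∫ r : Set.Ioi (0 : ℝ), a r ∂(Measure.volumeIoiPow n) = ∫ r in Set.Ioi (0 : ℝ), r ^ n * a r := by
  simp only [Measure.volumeIoiPow, ENNReal.ofReal]
  rw [integral_withDensity_eq_integral_smul (measurable_subtype_coe.pow_const _).real_toNNReal,
    integral_subtype_comap measurableSet_Ioi fun r ↦ Real.toNNReal (r ^ n) • a r]
  refine setIntegral_congr_fun measurableSet_Ioi fun r hr ↦ ?_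
  rw [NNReal.smul_def, Real.coe_toNNReal _ (pow_nonneg (le_of_lt hr) _), smul_eq_mul]

variable {E : Type*} [NormedAddCommGroup E] [NormedSpace ℝ E]

/-- The punctured open star-shaped domain about the origin with radial function `ρ`; only the
values of `ρ` on the unit sphere matter. -/
def radialDomain (ρ : E → ℝ) : Set E :=
  {y | y ≠ 0 ∧ ‖y‖ < ρ (‖y‖⁻¹ • y)}

lemma radialDomain_eq_image (ρ : E → ℝ) :
    radialDomain ρ = (↑) '' (homeomorphUnitSphereProd E ⁻¹' {p | (p.2 : ℝ) < ρ p.1}) := by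
  ext y
  simp [radialDomain, and_comm]

variable [FiniteDimensional ℝ E] [MeasurableSpace E] [BorelSpace E]

lemma measurableSet_radialDomain {ρ : E → ℝ} (hρ : Measurable fun x : sphere (0 : E) 1 ↦ ρ x) :
    MeasurableSet (radialDomain ρ) := by
  rw [radialDomain_eq_image]
  refine (MeasurableEmbedding.subtype_coe
    (measurableSet_singleton _).compl).measurableSet_image.2 ?_
  exact (homeomorphUnitSphereProd E).measurable
    (measurableSet_lt (by fun_prop) (hρ.comp measurable_fst))

variable [Nontrivial E] (μ : Measure E) [μ.IsAddHaarMeasure]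

lemma integral_mul_radial (a : ℝ → ℝ) (k : E → ℝ) :
    ∫ y, a ‖y‖ * k (‖y‖⁻¹ • y) ∂μ
      = (∫ x : sphere (0 : E) 1, k x ∂μ.toSphere)
        * ∫ r in Set.Ioi (0 : ℝ), r ^ (finrank ℝ E - 1) * a r := by
  rw [← integral_volumeIoiPow, ← integral_prod_mul (fun x : sphere (0 : E) 1 ↦ k x),
    ← μ.measurePreserving_homeomorphUnitSphereProd.integral_comp
      (homeomorphUnitSphereProd E).measurableEmbedding,
    ← restrict_compl_singleton (μ := μ) 0,
    ← integral_subtype_comap (measurableSet_singleton _).compl fun y ↦ a ‖y‖ * k (‖y‖⁻¹ • y)]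
  simp [mul_comm]

lemma setLIntegral_radialDomain {c : E → ℝ≥0∞} {ρ : E → ℝ}
    (hc : Measurable fun x : sphere (0 : E) 1 ↦ c x)
    (hρ : Measurable fun x : sphere (0 : E) 1 ↦ ρ x) (hρ_pos : ∀ x ∈ sphere (0 : E) 1, 0 < ρ x) :
    ∫⁻ y in radialDomain ρ, c (‖y‖⁻¹ • y) ∂μ
      = ∫⁻ x : sphere (0 : E) 1,
          c x * ENNReal.ofReal (ρ x ^ finrank ℝ E / finrank ℝ E) ∂μ.toSphere := by
  set W : Set (sphere (0 : E) 1 × Set.Ioi (0 : ℝ)) := {p | (p.2 : ℝ) < ρ p.1} with hW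
  have hW_meas : MeasurableSet W := measurableSet_lt (by fun_prop) (hρ.comp measurable_fst)
  have hdim : finrank ℝ E - 1 + 1 = finrank ℝ E := Nat.sub_add_cancel finrank_pos
  calc ∫⁻ y in radialDomain ρ, c (‖y‖⁻¹ • y) ∂μ
      = ∫⁻ y : ({0}ᶜ : Set E), (radialDomain ρ).indicator (fun y ↦ c (‖y‖⁻¹ • y)) y
          ∂(μ.comap (↑)) := by
        rw [lintegral_subtype_comap (measurableSet_singleton _).compl, restrict_compl_singleton,
          lintegral_indicator (measurableSet_radialDomain hρ)]
    _ = ∫⁻ p, W.indicator (fun p ↦ c p.1) p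
          ∂(μ.toSphere.prod (Measure.volumeIoiPow (finrank ℝ E - 1))) := by
        rw [← μ.measurePreserving_homeomorphUnitSphereProd.lintegral_comp_emb
          (homeomorphUnitSphereProd E).measurableEmbedding]
        refine lintegral_congr fun y ↦ ?_
        have hy : (y : E) ≠ 0 := y.2
        simp [Set.indicator, hW, radialDomain, hy]
    _ = ∫⁻ x, ∫⁻ r, W.indicator (fun p ↦ c p.1) (x, r)
          ∂(Measure.volumeIoiPow (finrank ℝ E - 1)) ∂μ.toSphere :=
        lintegral_prod _ ((hc.comp measurable_fst).indicator hW_meas).aemeasurable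
    _ = _ := by
        refine lintegral_congr fun x ↦ ?_
        have hvol := Measure.volumeIoiPow_apply_Iio (finrank ℝ E - 1) ⟨ρ x, hρ_pos x x.2⟩
        rw [hdim, ← Nat.cast_add_one, hdim] at hvol
        rw [← hvol, ← lintegral_indicator_const measurableSet_Iio]
        refine lintegral_congr fun r ↦ ?_
        simp [Set.indicator, hW, ← Subtype.coe_lt_coe]

end Polar

section Homogeneity

open scoped Topology

lemma ne_zero_of_mem_sphere_zero_one {E : Type*} [NormedAddCommGroup E] {x : E}
    (hx : x ∈ sphere (0 : E) 1) : x ≠ 0 :=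
  ne_zero_of_mem_sphere one_ne_zero ⟨x, hx⟩

variable {E F : Type*} [NormedAddCommGroup E] [NormedSpace ℝ E] [NormedAddCommGroup F]
  [NormedSpace ℝ F]

lemma fderiv_smul_of_eventually_smul {f : E → F} {y : E} {a c : ℝ} (hc : c ≠ 0)
    (hf : ∀ᶠ z in 𝓝 y, f (c • z) = a • f z) :
    fderiv ℝ f (c • y) = (c⁻¹ * a) • fderiv ℝ f y := by
  have h : c • fderiv ℝ f (c • y) = a • fderiv ℝ f y := by
    rw [← fderiv_comp_smul, Filter.EventuallyEq.fderiv_eq hf]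
    exact congrFun (fderiv_const_smul_field a) y
  rw [mul_smul, ← h, inv_smul_smul₀ hc]

lemma fderiv_apply_self_of_eventually_smul {f : E → F} {y : E} (hf : DifferentiableAt ℝ f y)
    {a : ℝ → ℝ} {a' : ℝ} (ha : HasDerivAt a a' 1)
    (h : ∀ᶠ c : ℝ in 𝓝 1, f (c • y) = a c • f y) : fderiv ℝ f y y = a' • f y := by
  have hray : HasDerivAt (fun c : ℝ ↦ f (c • y)) (fderiv ℝ f y y) 1 := by
    have := (show HasFDerivAt f (fderiv ℝ f y) ((1 : ℝ) • y) by
      simpa using hf.hasFDerivAt).comp_hasDerivAt (1 : ℝ) ((hasDerivAt_id (1 : ℝ)).smul_const y)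
    simpa [Function.comp_def] using this
  exact hray.unique ((ha.smul_const (f y)).congr_of_eventuallyEq h)

lemma inv_norm_smul_mem_sphere {y : E} (hy : y ≠ 0) : ‖y‖⁻¹ • y ∈ sphere (0 : E) 1 := by
  simp [norm_smul, hy]

lemma fderiv_sub_le_sub_of_convexOn {f : E → ℝ} {f' : E →L[ℝ] ℝ} {x : E}
    (hconv : ConvexOn ℝ Set.univ f) (hf : HasFDerivAt f f' x) (z : E) : f' (z - x) ≤ f z - f x := by
  have hline : HasDerivAt (fun t : ℝ ↦ f (AffineMap.lineMap x z t)) (f' (z - x)) 0 :=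
    HasFDerivAt.comp_hasDerivAt (0 : ℝ) (by simpa using hf) AffineMap.hasDerivAt_lineMap
  have hslope := (hconv.comp_affineMap (AffineMap.lineMap x z)).le_slope_of_hasDerivAt
    (Set.mem_univ 0) (Set.mem_univ 1) one_pos hline
  simpa [slope_def_field] using hslope

lemma exists_pos_mul_norm_sq_le [FiniteDimensional ℝ E] {Q : E → ℝ} (hQ : Continuous Q)
    (hQ_smul : ∀ (c : ℝ) w, Q (c • w) = c ^ 2 * Q w) (hQ_pos : ∀ w ≠ 0, 0 < Q w) :
    ∃ c > 0, ∀ w, c * ‖w‖ ^ 2 ≤ Q w := by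
  have := FiniteDimensional.proper_real E
  rcases subsingleton_or_nontrivial E with hE | hE
  · exact ⟨1, one_pos, fun w ↦ by simpa [Subsingleton.elim w 0] using (hQ_smul 0 0).ge⟩
  obtain ⟨w₀, hw₀, hmin⟩ := (isCompact_sphere (0 : E) 1).exists_isMinOn
    (NormedSpace.sphere_nonempty.2 zero_le_one) hQ.continuousOn
  refine ⟨Q w₀, hQ_pos w₀ (ne_zero_of_mem_sphere_zero_one hw₀), fun w ↦ ?_⟩
  rcases eq_or_ne w 0 with rfl | hw
  · simpa using (hQ_smul 0 0).ge
  calc Q w₀ * ‖w‖ ^ 2 ≤ Q (‖w‖⁻¹ • w) * ‖w‖ ^ 2 := by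
        gcongr
        exact hmin (inv_norm_smul_mem_sphere hw)
    _ = Q w := by
        have := norm_ne_zero_iff.2 hw
        rw [hQ_smul]
        field_simp

end Homogeneity

section Hessian

open scoped Topology

variable {E : Type*} [NormedAddCommGroup E] [InnerProductSpace ℝ E] [CompleteSpace E]

/-- The Hessian of `f` at `y` as an endomorphism: the derivative of the gradient. -/
def hessianMap (f : E → ℝ) (y : E) : E →L[ℝ] E := fderiv ℝ (gradient f) y

variable {f : E → ℝ} {y : E}

lemma gradient_smul_of_homogeneous {c : ℝ} (hc : c ≠ 0) (hf : ∀ z, f (c • z) = c * f z) :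
    gradient f (c • y) = gradient f y := by
  rw [gradient, gradient, fderiv_smul_of_eventually_smul hc (.of_forall hf),
    inv_mul_cancel₀ hc, one_smul]

lemma contDiffAt_gradient {m k : WithTop ℕ∞} (hf : ContDiffAt ℝ m f y) (hk : k + 1 ≤ m) :
    ContDiffAt ℝ k (gradient f) y :=
  (InnerProductSpace.toDual ℝ E).symm.toContinuousLinearEquiv.contDiff.contDiffAt.comp y
    (hf.fderiv_right hk)

lemma fderiv_fderiv_apply_eq_inner_hessianMap (v w : E) :
    fderiv ℝ (fderiv ℝ f) y v w = ⟪hessianMap f y v, w⟫ := by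
  have hdual : fderiv ℝ f = InnerProductSpace.toDual ℝ E ∘ gradient f := by
    ext z v
    simp [gradient]
  rw [hdual, LinearIsometryEquiv.comp_fderiv]
  rfl

lemma inner_hessianMap_comm (hf : ContDiffAt ℝ 2 f y) (v w : E) :
    ⟪hessianMap f y v, w⟫ = ⟪hessianMap f y w, v⟫ := by
  rw [← fderiv_fderiv_apply_eq_inner_hessianMap, ← fderiv_fderiv_apply_eq_inner_hessianMap]
  exact hf.isSymmSndFDerivAt (by simp) v w

end Hessian

section EuclideanHessian

variable {n : ℕ} {H : Euc n → ℝ} {y : Euc n}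

lemma ehess_apply (hH : ContDiffAt ℝ 2 H y) (i j : Fin (n + 1)) :
    ehess n H y i j =
      ⟪hessianMap H y (EuclideanSpace.single i 1), EuclideanSpace.single j 1⟫ := by
  have hfderiv : DifferentiableAt ℝ (fderiv ℝ H) y :=
    (hH.fderiv_right (m := 1) (by norm_num)).differentiableAt one_ne_zero
  simp only [ehess, Matrix.of_apply]
  rw [fderiv_clm_apply hfderiv (differentiableAt_const _)]
  simp [fderiv_fderiv_apply_eq_inner_hessianMap]

lemma isSymm_ehess (hH : ContDiffAt ℝ 2 H y) : (ehess n H y).IsSymm := by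
  ext i j
  rw [transpose_apply, ehess_apply hH, ehess_apply hH, inner_hessianMap_comm hH]

lemma ehess_eq_toMatrix (hH : ContDiffAt ℝ 2 H y) :
    ehess n H y = LinearMap.toMatrix (EuclideanSpace.basisFun (Fin (n + 1)) ℝ).toBasis
      (EuclideanSpace.basisFun (Fin (n + 1)) ℝ).toBasis (hessianMap H y : Euc n →ₗ[ℝ] Euc n) := by
  ext i j
  rw [LinearMap.toMatrix_apply, ehess_apply hH, inner_hessianMap_comm hH]
  simp [EuclideanSpace.inner_single_right]

lemma ehess_mulVec (hH : ContDiffAt ℝ 2 H y) (w : Euc n) :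
    ehess n H y *ᵥ w.ofLp = (hessianMap H y w).ofLp := by
  rw [ehess_eq_toMatrix hH]
  exact LinearMap.toMatrix_mulVec_repr (EuclideanSpace.basisFun (Fin (n + 1)) ℝ).toBasis
    (EuclideanSpace.basisFun (Fin (n + 1)) ℝ).toBasis (hessianMap H y : Euc n →ₗ[ℝ] Euc n) w

lemma inner_eq_dotProduct (v w : Euc n) : ⟪v, w⟫ = v.ofLp ⬝ᵥ w.ofLp := by
  rw [EuclideanSpace.inner_eq_star_dotProduct, star_trivial, dotProduct_comm]

lemma bmat_eq_ehess_add_vecMulVec :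
    bmat n H y = ehess n H y + H y • vecMulVec y.ofLp y.ofLp := rfl

lemma dotProduct_bmat_mulVec_self (hH : ContDiffAt ℝ 2 H y) (w : Euc n) :
    w.ofLp ⬝ᵥ bmat n H y *ᵥ w.ofLp = ⟪hessianMap H y w, w⟫ + H y * ⟪y, w⟫ ^ 2 := by
  rw [bmat_eq_ehess_add_vecMulVec, add_mulVec, ehess_mulVec hH, smul_mulVec, vecMulVec_mulVec,
    dotProduct_add, dotProduct_smul, dotProduct_smul, dotProduct_comm, inner_eq_dotProduct,
    inner_eq_dotProduct, dotProduct_comm w.ofLp y.ofLp, MulOpposite.smul_eq_mul_unop, sq]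
  rfl

end EuclideanHessian

/-- `H` is the one-homogeneous extension to `ℝ^{n+1}` of the support function of a convex body of
class `C²₊` containing the origin in its interior. -/
structure IsC2PlusSupport (n : ℕ) (H : Euc n → ℝ) : Prop where
  homog : ∀ c : ℝ, 0 < c → ∀ x : Euc n, H (c • x) = c * H x
  convexOn : ConvexOn ℝ Set.univ H
  contDiffOn : ContDiffOn ℝ 2 H {(0 : Euc n)}ᶜ
  pos_of_mem_sphere : ∀ x ∈ sphere (0 : Euc n) 1, 0 < H x
  posDef : ∀ x ∈ sphere (0 : Euc n) 1, (bmat n H x).PosDef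

namespace IsC2PlusSupport

open scoped Topology

variable {n : ℕ} {H : Euc n → ℝ} {y : Euc n}

lemma contDiffAt (h : IsC2PlusSupport n H) (hy : y ≠ 0) : ContDiffAt ℝ 2 H y :=
  h.contDiffOn.contDiffAt (isOpen_compl_singleton.mem_nhds hy)

lemma hasFDerivAt (h : IsC2PlusSupport n H) (hy : y ≠ 0) :
    HasFDerivAt H (innerSL ℝ (gradient H y)) y :=
  ((h.contDiffAt hy).differentiableAt two_ne_zero).hasGradientAt.hasFDerivAt

lemma contDiffAt_gradient (h : IsC2PlusSupport n H) (hy : y ≠ 0) :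
    ContDiffAt ℝ 1 (gradient H) y :=
  _root_.contDiffAt_gradient (h.contDiffAt hy) (by norm_num)

lemma hasStrictFDerivAt_gradient (h : IsC2PlusSupport n H) (hy : y ≠ 0) :
    HasStrictFDerivAt (gradient H) (hessianMap H y) y :=
  (h.contDiffAt_gradient hy).hasStrictFDerivAt one_ne_zero

lemma continuousAt_hessianMap (h : IsC2PlusSupport n H) (hy : y ≠ 0) :
    ContinuousAt (hessianMap H) y :=
  ((h.contDiffAt_gradient hy).fderiv_right (m := 0) (by norm_num)).continuousAt

lemma gradient_smul (h : IsC2PlusSupport n H) {c : ℝ} (hc : 0 < c) (y : Euc n) :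
    gradient H (c • y) = gradient H y :=
  gradient_smul_of_homogeneous hc.ne' (h.homog c hc)

lemma hessianMap_smul (h : IsC2PlusSupport n H) {c : ℝ} (hc : 0 < c) (y : Euc n) :
    hessianMap H (c • y) = c⁻¹ • hessianMap H y := by
  have := fderiv_smul_of_eventually_smul (f := gradient H) (y := y) (a := 1) hc.ne'
    (.of_forall fun z ↦ by rw [h.gradient_smul hc, one_smul])
  rwa [mul_one] at this

lemma inner_gradient_self (h : IsC2PlusSupport n H) (hy : y ≠ 0) : ⟪gradient H y, y⟫ = H y := by
  have := fderiv_apply_self_of_eventually_smul (h.hasFDerivAt hy).differentiableAt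
    (hasDerivAt_id 1) ((lt_mem_nhds one_pos).mono fun c hc ↦ h.homog c hc y)
  rwa [(h.hasFDerivAt hy).fderiv, innerSL_apply_apply, one_smul] at this

lemma hessianMap_self (h : IsC2PlusSupport n H) (hy : y ≠ 0) : hessianMap H y y = 0 := by
  have := fderiv_apply_self_of_eventually_smul
    (h.hasStrictFDerivAt_gradient hy).differentiableAt (hasDerivAt_const 1 1)
    ((lt_mem_nhds one_pos).mono fun c hc ↦ by rw [h.gradient_smul hc, one_smul])
  rwa [zero_smul] at this

lemma pos (h : IsC2PlusSupport n H) (hy : y ≠ 0) : 0 < H y := by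
  have hpos := h.pos_of_mem_sphere _ (inv_norm_smul_mem_sphere hy)
  rw [h.homog _ (by positivity)] at hpos
  exact pos_of_mul_pos_right hpos (by positivity)

lemma inner_hessianMap_self_add_pos (h : IsC2PlusSupport n H) {x : Euc n}
    (hx : x ∈ sphere (0 : Euc n) 1) {w : Euc n} (hw : w ≠ 0) :
    0 < ⟪hessianMap H x w, w⟫ + H x * ⟪x, w⟫ ^ 2 := by
  rw [← dotProduct_bmat_mulVec_self (h.contDiffAt (ne_zero_of_mem_sphere_zero_one hx))]
  exact (h.posDef x hx).dotProduct_mulVec_pos (x := w.ofLp) (by simpa using hw)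

lemma inner_hessianMap_self_pos (h : IsC2PlusSupport n H) (hy : y ≠ 0) {w : Euc n}
    (hw : ∀ a : ℝ, w ≠ a • y) : 0 < ⟪hessianMap H y w, w⟫ := by
  -- `w ↦ ⟪hessianMap H y w, w⟫` only sees the component of `w` orthogonal to `y`.
  set u := ‖y‖⁻¹ • y with hu
  have hu_mem : u ∈ sphere (0 : Euc n) 1 := inv_norm_smul_mem_sphere hy
  have hu_inner : ⟪u, u⟫ = 1 := by
    rw [real_inner_self_eq_norm_sq, mem_sphere_zero_iff_norm.1 hu_mem, one_pow]
  have hu_ne := ne_zero_of_mem_sphere_zero_one hu_mem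
  have hperp : ⟪u, w - ⟪u, w⟫ • u⟫ = 0 := by
    rw [inner_sub_right, inner_smul_right, hu_inner, mul_one, sub_self]
  have hpos := h.inner_hessianMap_self_add_pos hu_mem (w := w - ⟪u, w⟫ • u)
    (sub_ne_zero.2 (by rw [hu, smul_smul]; exact hw _))
  rw [hperp, map_sub, map_smul, h.hessianMap_self hu_ne, smul_zero, sub_zero, inner_sub_right,
    inner_smul_right, inner_hessianMap_comm (h.contDiffAt hu_ne) w u, h.hessianMap_self hu_ne,
    inner_zero_left, hu, h.hessianMap_smul (by positivity)] at hpos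
  simp only [inv_inv, _root_.smul_apply, mul_zero, sub_zero, ne_eq, OfNat.ofNat_ne_zero,
    not_false_eq_true, zero_pow, add_zero, real_inner_smul_left] at hpos
  exact pos_of_mul_pos_right hpos (norm_nonneg y)

lemma inner_hessianMap_self_nonneg (h : IsC2PlusSupport n H) (hy : y ≠ 0) (w : Euc n) :
    0 ≤ ⟪hessianMap H y w, w⟫ := by
  by_cases hw : ∃ a : ℝ, w = a • y
  · obtain ⟨a, rfl⟩ := hw
    simp [h.hessianMap_self hy]
  · exact (h.inner_hessianMap_self_pos hy (not_exists.1 hw)).le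

lemma inner_gradient_le (h : IsC2PlusSupport n H) (hy : y ≠ 0) (z : Euc n) :
    ⟪gradient H y, z⟫ ≤ H z := by
  have := fderiv_sub_le_sub_of_convexOn h.convexOn (h.hasFDerivAt hy) z
  rw [innerSL_apply_apply, inner_sub_right, h.inner_gradient_self hy] at this
  linarith

end IsC2PlusSupport

section LegendreMap

open scoped Topology

/-- `t S + g gᵀ` is congruent to `t (S + t x xᵀ)` by a shear along `x` mapping `x` to `t⁻¹ g`. -/
lemma det_smul_add_vecMulVec_self {ι 𝕜 : Type*} [Fintype ι] [DecidableEq ι] [Field 𝕜]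
    {S : Matrix ι ι 𝕜} {x g : ι → 𝕜} {t : 𝕜} (ht : t ≠ 0) (hSx : S *ᵥ x = 0) (hxS : x ᵥ* S = 0)
    (hxx : x ⬝ᵥ x = 1) (hxg : x ⬝ᵥ g = t) :
    (t • S + vecMulVec g g).det = t ^ Fintype.card ι * (S + t • vecMulVec x x).det := by
  set L : Matrix ι ι 𝕜 := 1 + vecMulVec (t⁻¹ • g - x) x with hL
  have hL_det : L.det = 1 := by
    rw [hL, vecMulVec_eq Unit, det_one_add_replicateCol_mul_replicateRow, dotProduct_sub,
      dotProduct_smul, hxx, hxg, smul_eq_mul, inv_mul_cancel₀ ht, sub_self, add_zero]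
  have hLS : L * S = S := by
    rw [hL, add_mul, one_mul, vecMulVec_mul, hxS, vecMulVec_zero, add_zero]
  have hSL : S * Lᵀ = S := by
    rw [hL, transpose_add, transpose_one, mul_add, mul_one, transpose_vecMulVec, mul_vecMulVec,
      hSx, zero_vecMulVec, add_zero]
  have hLx : L *ᵥ x = t⁻¹ • g := by
    rw [hL, add_mulVec, one_mulVec, vecMulVec_mulVec, hxx, MulOpposite.op_one, one_smul,
      add_sub_cancel]
  have hcongr : t • S + vecMulVec g g = L * (t • (S + t • vecMulVec x x)) * Lᵀ := by
    rw [Matrix.mul_smul, Matrix.smul_mul, mul_add, add_mul, hLS, hSL, Matrix.mul_smul,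
      Matrix.smul_mul, mul_vecMulVec, vecMulVec_mul, vecMul_transpose, hLx, smul_vecMulVec,
      vecMulVec_smul, smul_add]
    simp [smul_smul, ht]
  rw [hcongr, det_mul, det_mul, det_transpose, hL_det, det_smul, one_mul, mul_one]

variable {n : ℕ} {H : Euc n → ℝ} {y : Euc n}

/-- The gradient `H ∇H` of `H² / 2`, a bijection of `ℝ^{n+1} ∖ {0}` carrying the unit ball of the
gauge `H` to the convex body whose support function is `H`. -/
def legendreMap (H : Euc n → ℝ) (y : Euc n) : Euc n := H y • gradient H y

/-- The derivative `H D²H + ∇H ∇Hᵀ` of `legendreMap H` at `y`. -/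
def legendreMapDeriv (H : Euc n → ℝ) (y : Euc n) : Euc n →L[ℝ] Euc n :=
  H y • hessianMap H y + (innerSL ℝ (gradient H y)).smulRight (gradient H y)

namespace IsC2PlusSupport

lemma volDens_eq_det_bmat (h : IsC2PlusSupport n H) (hy : y ≠ 0) :
    volDens n H y = (bmat n H y).det := by
  rw [volDens, sigman, mul_div_cancel₀ _ (h.pos hy).ne']

lemma volDens_pos (h : IsC2PlusSupport n H) {x : Euc n} (hx : x ∈ sphere (0 : Euc n) 1) :
    0 < volDens n H x := by
  rw [h.volDens_eq_det_bmat (ne_zero_of_mem_sphere_zero_one hx)]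
  exact (h.posDef x hx).det_pos

lemma hasFDerivAt_legendreMap (h : IsC2PlusSupport n H) (hy : y ≠ 0) :
    HasFDerivAt (legendreMap H) (legendreMapDeriv H y) y :=
  (h.hasFDerivAt hy).smul (h.hasStrictFDerivAt_gradient hy).hasFDerivAt

lemma legendreMapDeriv_smul (h : IsC2PlusSupport n H) {c : ℝ} (hc : 0 < c) :
    legendreMapDeriv H (c • y) = legendreMapDeriv H y := by
  rw [legendreMapDeriv, legendreMapDeriv, h.homog c hc, h.hessianMap_smul hc, h.gradient_smul hc,
    smul_smul, mul_right_comm, mul_inv_cancel₀ hc.ne', one_mul]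

lemma det_legendreMapDeriv_of_mem_sphere (h : IsC2PlusSupport n H) {x : Euc n}
    (hx : x ∈ sphere (0 : Euc n) 1) :
    (legendreMapDeriv H x).det = H x ^ (n + 1) * volDens n H x := by
  have hx₀ := ne_zero_of_mem_sphere_zero_one hx
  have hSx : ehess n H x *ᵥ x.ofLp = 0 := by
    rw [ehess_mulVec (h.contDiffAt hx₀), h.hessianMap_self hx₀, WithLp.ofLp_zero]
  have hxS : x.ofLp ᵥ* ehess n H x = 0 := by
    rw [← mulVec_transpose, isSymm_ehess (h.contDiffAt hx₀), hSx]
  have hxx : x.ofLp ⬝ᵥ x.ofLp = 1 := by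
    rw [← inner_eq_dotProduct, real_inner_self_eq_norm_sq, mem_sphere_zero_iff_norm.1 hx, one_pow]
  have hxg : x.ofLp ⬝ᵥ (gradient H x).ofLp = H x := by
    rw [← inner_eq_dotProduct, real_inner_comm, h.inner_gradient_self hx₀]
  have hmatrix : LinearMap.toMatrix (EuclideanSpace.basisFun (Fin (n + 1)) ℝ).toBasis
      (EuclideanSpace.basisFun (Fin (n + 1)) ℝ).toBasis (legendreMapDeriv H x : Euc n →ₗ[ℝ] Euc n) =
      H x • ehess n H x + vecMulVec (gradient H x).ofLp (gradient H x).ofLp := by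
    rw [ehess_eq_toMatrix (h.contDiffAt hx₀)]
    ext i j
    simp [LinearMap.toMatrix_apply, legendreMapDeriv, vecMulVec_apply, mul_comm,
      EuclideanSpace.inner_single_right, -inner_gradient_left]
  rw [ContinuousLinearMap.det,
    ← LinearMap.det_toMatrix (EuclideanSpace.basisFun (Fin (n + 1)) ℝ).toBasis, hmatrix,
    det_smul_add_vecMulVec_self (h.pos hx₀).ne' hSx hxS hxx hxg, Fintype.card_fin,
    h.volDens_eq_det_bmat hx₀, bmat_eq_ehess_add_vecMulVec]

lemma det_legendreMapDeriv (h : IsC2PlusSupport n H) (hy : y ≠ 0) :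
    (legendreMapDeriv H y).det = H (‖y‖⁻¹ • y) ^ (n + 1) * volDens n H (‖y‖⁻¹ • y) := by
  rw [← h.det_legendreMapDeriv_of_mem_sphere (inv_norm_smul_mem_sphere hy),
    h.legendreMapDeriv_smul (by positivity)]

lemma gradient_eq_of_inner_gradient_eq (h : IsC2PlusSupport n H) {x z : Euc n} (hx : x ≠ 0)
    (hz : z ≠ 0) (hxz : ⟪gradient H x, z⟫ = H z) : gradient H z = gradient H x := by
  have hmin : IsLocalMin (fun u ↦ H u - ⟪gradient H x, u⟫) z :=
    .of_forall fun u ↦ by simpa [hxz] using h.inner_gradient_le hx u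
  have hzero := hmin.hasFDerivAt_eq_zero
    ((h.hasFDerivAt hz).sub (innerSL ℝ (gradient H x)).hasFDerivAt)
  exact ext_inner_right ℝ fun w ↦ sub_eq_zero.1 (DFunLike.congr_fun hzero w)

lemma gradient_add_smul_eq_of_inner_gradient_eq (h : IsC2PlusSupport n H) {x z : Euc n}
    (hx : x ≠ 0) (hz : z ≠ 0) (hxz : ⟪gradient H x, z⟫ = H z) {t : ℝ} (ht : t ∈ Set.Icc 0 1) :
    gradient H (x + t • (z - x)) = gradient H x := by
  have hinner : ⟪gradient H x, x + t • (z - x)⟫ = (1 - t) * H x + t * H z := by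
    rw [inner_add_right, real_inner_smul_right, inner_sub_right, h.inner_gradient_self hx, hxz]
    ring
  have hpos : 0 < (1 - t) * H x + t * H z :=
    (convex_Ioi (0 : ℝ)) (h.pos hx) (h.pos hz) (sub_nonneg.2 ht.2) ht.1 (sub_add_cancel 1 t)
  have hne : x + t • (z - x) ≠ 0 := fun h₀ ↦ by
    rw [h₀, inner_zero_right] at hinner
    exact hpos.ne hinner
  refine h.gradient_eq_of_inner_gradient_eq hx hne (le_antisymm (h.inner_gradient_le hx _) ?_)
  have hconv := h.convexOn.2 (Set.mem_univ x) (Set.mem_univ z) (sub_nonneg.2 ht.2) ht.1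
    (sub_add_cancel 1 t)
  rwa [hinner, show x + t • (z - x) = (1 - t) • x + t • z by module]

/-- Equality in the support inequality makes `∇H` constant on the segment from `x` to `z`, so
`z - x` lies in the kernel of `D²H(x)`, which is spanned by `x`. -/
lemma sameRay_of_inner_gradient_eq (h : IsC2PlusSupport n H) {x z : Euc n} (hx : x ≠ 0)
    (hz : z ≠ 0) (hxz : ⟪gradient H x, z⟫ = H z) : SameRay ℝ x z := by
  have hker : hessianMap H x (z - x) = 0 := by
    have hderiv : HasDerivAt (fun t : ℝ ↦ gradient H (x + t • (z - x)))
        (hessianMap H x (z - x)) 0 := by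
      have hline : HasDerivAt (fun t : ℝ ↦ x + t • (z - x)) (z - x) 0 := by
        simpa using ((hasDerivAt_id (0 : ℝ)).smul_const (z - x)).const_add x
      exact HasFDerivAt.comp_hasDerivAt 0
        (by simpa using (h.hasStrictFDerivAt_gradient hx).hasFDerivAt) hline
    refine (uniqueDiffOn_Icc one_pos 0 (Set.left_mem_Icc.2 zero_le_one)).eq_deriv _
      hderiv.hasDerivWithinAt ((hasDerivWithinAt_const 0 _ (gradient H x)).congr_of_mem
        (fun t ht ↦ h.gradient_add_smul_eq_of_inner_gradient_eq hx hz hxz ht)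
        (Set.left_mem_Icc.2 zero_le_one))
  obtain ⟨a, ha⟩ : ∃ a : ℝ, z - x = a • x := by
    by_contra! hne
    simpa [hker] using h.inner_hessianMap_self_pos hx hne
  obtain rfl : z = (1 + a) • x := by rw [add_smul, one_smul, ← ha, add_sub_cancel]
  rw [real_inner_smul_right, h.inner_gradient_self hx] at hxz
  exact SameRay.sameRay_pos_smul_right x
    (pos_of_mul_pos_left (hxz ▸ h.pos hz) (h.pos hx).le)

lemma inner_gradient_lt (h : IsC2PlusSupport n H) {x z : Euc n} (hx : x ∈ sphere (0 : Euc n) 1)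
    (hz : z ∈ sphere (0 : Euc n) 1) (hxz : x ≠ z) : ⟪gradient H x, z⟫ < H z := by
  have hx₀ := ne_zero_of_mem_sphere_zero_one hx
  refine (h.inner_gradient_le hx₀ z).lt_of_ne fun heq ↦ hxz ?_
  exact (sameRay_iff_of_norm_eq (by rw [mem_sphere_zero_iff_norm.1 hx,
    mem_sphere_zero_iff_norm.1 hz])).1
    (h.sameRay_of_inner_gradient_eq hx₀ (ne_zero_of_mem_sphere_zero_one hz) heq)

lemma injOn_legendreMap (h : IsC2PlusSupport n H) : Set.InjOn (legendreMap H) {0}ᶜ := by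
  have hle : ∀ {y z : Euc n}, y ≠ 0 → z ≠ 0 → legendreMap H y = legendreMap H z → H y ≤ H z := by
    intro y z hy hz hyz
    have hinner := congrArg (⟪·, y⟫) hyz
    simp only [legendreMap, real_inner_smul_left, h.inner_gradient_self hy] at hinner
    refine le_of_mul_le_mul_right ?_ (h.pos hy)
    rw [hinner]
    exact mul_le_mul_of_nonneg_left (h.inner_gradient_le hz y) (h.pos hz).le
  intro y hy z hz hyz
  have hH : H y = H z := le_antisymm (hle hy hz hyz) (hle hz hy hyz.symm)
  have hgrad : gradient H y = gradient H z := by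
    rw [legendreMap, legendreMap, hH] at hyz
    exact smul_right_injective _ (h.pos hz).ne' hyz
  obtain ⟨c, hc, rfl⟩ := (h.sameRay_of_inner_gradient_eq hy hz
    (by rw [hgrad, h.inner_gradient_self hz])).exists_pos_left hy hz
  rw [h.homog c hc, eq_comm, mul_eq_right₀ (h.pos hy).ne'] at hH
  rw [hH, one_smul]

end IsC2PlusSupport

end LegendreMap

section SphereIntegrals

variable {n : ℕ}

instance : IsFiniteMeasure (sphMeasure n) :=
  inferInstanceAs (IsFiniteMeasure (volume : Measure (Euc n)).toSphere)

lemma integrable_sphMeasure_of_continuous {F : Type*} [NormedAddCommGroup F]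
    {f : sphere (0 : Euc n) 1 → F} (hf : Continuous f) : Integrable f (sphMeasure n) :=
  hf.integrable_of_hasCompactSupport (.of_compactSpace f)

lemma continuous_restrict_sphere {X : Type*} [TopologicalSpace X] {f : Euc n → X}
    (hf : ∀ y ≠ 0, ContinuousAt f y) : Continuous fun x : sphere (0 : Euc n) 1 ↦ f x :=
  continuous_iff_continuousAt.2 fun x ↦
    (hf x (ne_zero_of_mem_sphere_zero_one x.2)).comp continuousAt_subtype_val

lemma contDiffAt_det_bmat {H : Euc n → ℝ} {y : Euc n} {k m : WithTop ℕ∞}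
    (hH : ContDiffAt ℝ m H y) (hkm : k + 2 ≤ m) :
    ContDiffAt ℝ k (fun z ↦ (bmat n H z).det) y := by
  have hentry : ∀ i j, ContDiffAt ℝ k (fun z ↦ bmat n H z i j) y := fun i j ↦ by
    have hfderiv : ContDiffAt ℝ (k + 1) (fun z ↦ fderiv ℝ H z (EuclideanSpace.single j 1)) y :=
      (hH.fderiv_right (by rwa [add_assoc, one_add_one_eq_two])).clm_apply contDiffAt_const
    have hehess : ContDiffAt ℝ k (fun z ↦ ehess n H z i j) y :=
      (hfderiv.fderiv_right le_rfl).clm_apply contDiffAt_const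
    exact hehess.add ((hH.of_le (le_self_add.trans hkm)).mul (by fun_prop))
  simp only [det_apply']
  exact ContDiffAt.sum fun σ _ ↦ contDiffAt_const.mul (contDiffAt_prod fun i _ ↦ hentry _ _)

lemma contDiffAt_volDens {H : Euc n → ℝ} {y : Euc n} {k m : WithTop ℕ∞}
    (hH : ContDiffAt ℝ m H y) (hkm : k + 2 ≤ m) (hy : H y ≠ 0) :
    ContDiffAt ℝ k (volDens n H) y :=
  have hHk : ContDiffAt ℝ k H y := hH.of_le (le_self_add.trans hkm)
  hHk.mul ((contDiffAt_det_bmat hH hkm).div hHk hy)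

end SphereIntegrals

section BrunnMinkowskiOnSphere

/-- The interior of the Wulff shape (Aleksandrov body) of `k : S^n → ℝ`. -/
def openWulffShape {n : ℕ} (k : Euc n → ℝ) : Set (Euc n) :=
  {y | ∀ z ∈ sphere (0 : Euc n) 1, ⟪y, z⟫ < k z}

namespace IsC2PlusSupport

variable {n : ℕ} {H ρ : Euc n → ℝ} {y : Euc n}

lemma continuous_sphere (h : IsC2PlusSupport n H) :
    Continuous fun x : sphere (0 : Euc n) 1 ↦ H x :=
  continuous_restrict_sphere fun _ hy ↦ (h.contDiffAt hy).continuousAt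

lemma continuous_gradient_sphere (h : IsC2PlusSupport n H) :
    Continuous fun x : sphere (0 : Euc n) 1 ↦ gradient H x :=
  continuous_restrict_sphere fun _ hy ↦ (h.contDiffAt_gradient hy).continuousAt

lemma continuous_hessianMap_sphere (h : IsC2PlusSupport n H) :
    Continuous fun x : sphere (0 : Euc n) 1 ↦ hessianMap H x :=
  continuous_restrict_sphere fun _ hy ↦ h.continuousAt_hessianMap hy

lemma continuous_volDens_sphere (h : IsC2PlusSupport n H) :
    Continuous fun x : sphere (0 : Euc n) 1 ↦ volDens n H x :=
  continuous_restrict_sphere fun _ hy ↦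
    (contDiffAt_volDens (k := 0) (h.contDiffAt hy) (by norm_num) (h.pos hy).ne').continuousAt

lemma measurableSet_radialDomain_div (h : IsC2PlusSupport n H)
    (hρ : Continuous fun x : sphere (0 : Euc n) 1 ↦ ρ x) :
    MeasurableSet (radialDomain fun x ↦ ρ x / H x) :=
  measurableSet_radialDomain (hρ.measurable.div h.continuous_sphere.measurable)

lemma measurableSet_image_legendreMap (h : IsC2PlusSupport n H)
    (hρ : Continuous fun x : sphere (0 : Euc n) 1 ↦ ρ x) :
    MeasurableSet (legendreMap H '' radialDomain fun x ↦ ρ x / H x) :=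
  measurable_image_of_fderivWithin (h.measurableSet_radialDomain_div hρ)
    (fun _ hy ↦ (h.hasFDerivAt_legendreMap hy.1).hasFDerivWithinAt)
    (h.injOn_legendreMap.mono fun _ hy ↦ hy.1)

lemma volume_image_legendreMap (h : IsC2PlusSupport n H)
    (hρ : Continuous fun x : sphere (0 : Euc n) 1 ↦ ρ x)
    (hρ_pos : ∀ x ∈ sphere (0 : Euc n) 1, 0 < ρ x) :
    volume (legendreMap H '' radialDomain fun x ↦ ρ x / H x) = ENNReal.ofReal
      ((∫ x : sphere (0 : Euc n) 1, volDens n H x * ρ x ^ (n + 1) ∂sphMeasure n) / (n + 1)) := by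
  have hjac : ∀ y ∈ radialDomain fun x ↦ ρ x / H x, ENNReal.ofReal |(legendreMapDeriv H y).det| =
      ENNReal.ofReal (H (‖y‖⁻¹ • y) ^ (n + 1) * volDens n H (‖y‖⁻¹ • y)) := fun y hy ↦ by
    have hu := inv_norm_smul_mem_sphere hy.1
    rw [h.det_legendreMapDeriv hy.1,
      abs_of_pos (mul_pos (pow_pos (h.pos_of_mem_sphere _ hu) _) (h.volDens_pos hu))]
  have hmeas : Measurable fun x : sphere (0 : Euc n) 1 ↦
      ENNReal.ofReal (H x ^ (n + 1) * volDens n H x) :=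
    ((h.continuous_sphere.pow _).mul h.continuous_volDens_sphere).measurable.ennreal_ofReal
  have hint : Integrable (fun x : sphere (0 : Euc n) 1 ↦ volDens n H x * ρ x ^ (n + 1) / (n + 1))
      (sphMeasure n) :=
    integrable_sphMeasure_of_continuous ((h.continuous_volDens_sphere.mul (hρ.pow _)).div_const _)
  rw [← lintegral_abs_det_fderiv_eq_addHaar_image volume (h.measurableSet_radialDomain_div hρ)
      (fun y hy ↦ (h.hasFDerivAt_legendreMap hy.1).hasFDerivWithinAt)
      (h.injOn_legendreMap.mono fun _ hy ↦ hy.1),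
    setLIntegral_congr_fun (h.measurableSet_radialDomain_div hρ) hjac,
    setLIntegral_radialDomain volume (c := fun x ↦ ENNReal.ofReal (H x ^ (n + 1) * volDens n H x))
      hmeas (hρ.measurable.div h.continuous_sphere.measurable)
      (fun x hx ↦ div_pos (hρ_pos x hx) (h.pos_of_mem_sphere x hx)),
    ← integral_div, ofReal_integral_eq_lintegral_ofReal hint
      (.of_forall fun x ↦ div_nonneg
        (mul_nonneg (h.volDens_pos x.2).le (pow_nonneg (hρ_pos x x.2).le _)) (by positivity))]
  refine lintegral_congr fun x ↦ ?_
  have hHx := h.pos_of_mem_sphere x x.2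
  have hVx := h.volDens_pos x.2
  rw [← ENNReal.ofReal_mul (by positivity), finrank_euclideanSpace_fin, div_pow]
  congr 1
  push_cast
  field_simp

lemma image_legendreMap_subset_openWulffShape (h : IsC2PlusSupport n H) {k : Euc n → ℝ}
    (hk : ∀ z ∈ sphere (0 : Euc n) 1, 0 < k z)
    (hρk : ∀ x ∈ sphere (0 : Euc n) 1, ∀ z ∈ sphere (0 : Euc n) 1,
      ρ x * ⟪gradient H x, z⟫ ≤ k z) :
    legendreMap H '' radialDomain (fun x ↦ ρ x / H x) ⊆ openWulffShape k := by
  rintro _ ⟨y, ⟨hy, hyρ⟩, rfl⟩ z hz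
  have hu := inv_norm_smul_mem_sphere hy
  set u := ‖y‖⁻¹ • y with hu_def
  have hHy : H y = ‖y‖ * H u := by
    rw [hu_def, h.homog _ (by positivity), mul_inv_cancel_left₀ (norm_ne_zero_iff.2 hy)]
  rw [legendreMap, real_inner_smul_left, ← h.gradient_smul (inv_pos.2 (norm_pos_iff.2 hy)) y]
  rcases le_or_gt ⟪gradient H u, z⟫ 0 with hneg | hpos
  · exact (mul_nonpos_of_nonneg_of_nonpos (h.pos hy).le hneg).trans_lt (hk z hz)
  · rw [lt_div_iff₀ (h.pos_of_mem_sphere u hu), ← hHy] at hyρ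
    exact (mul_lt_mul_of_pos_right hyρ hpos).trans_le (hρk u hu z hz)

lemma inner_div_le_of_isMaxOn_sphere (h : IsC2PlusSupport n H) {z₀ : Euc n}
    (hmax : IsMaxOn (fun z ↦ ⟪y, z⟫ / H z) (sphere 0 1) z₀) {z : Euc n} (hz : z ≠ 0) :
    ⟪y, z⟫ ≤ ⟪y, z₀⟫ / H z₀ * H z := by
  have hle : ⟪y, ‖z‖⁻¹ • z⟫ / H (‖z‖⁻¹ • z) ≤ ⟪y, z₀⟫ / H z₀ := hmax (inv_norm_smul_mem_sphere hz)
  rwa [real_inner_smul_right, h.homog _ (by positivity),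
    mul_div_mul_left _ _ (by simpa using hz), div_le_iff₀ (h.pos hz)] at hle

/-- The preimage of `y` points in the direction `z₀` maximising `⟪y, z⟫ / H z`, where the gradients
of `⟪y, ·⟫` and `H` are parallel. -/
lemma openWulffShape_diff_zero_subset_image (h : IsC2PlusSupport n H) :
    openWulffShape H \ {0} ⊆ legendreMap H '' radialDomain fun x ↦ 1 / H x := by
  rintro y ⟨hy, hy₀⟩
  have hcont : ContinuousOn (fun z : Euc n ↦ ⟪y, z⟫ / H z) (sphere 0 1) := fun z hz ↦
    ((continuousAt_const.inner continuousAt_id).div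
      (h.contDiffAt (ne_zero_of_mem_sphere_zero_one hz)).continuousAt
      (h.pos_of_mem_sphere z hz).ne').continuousWithinAt
  obtain ⟨z₀, hz₀, hmax⟩ := (isCompact_sphere (0 : Euc n) 1).exists_isMaxOn
    ⟨_, inv_norm_smul_mem_sphere hy₀⟩ hcont
  have hz₀' := ne_zero_of_mem_sphere_zero_one hz₀
  have hH₀ := h.pos_of_mem_sphere z₀ hz₀
  set m := ⟪y, z₀⟫ / H z₀ with hm
  have hm_lt : m < 1 := (div_lt_one hH₀).2 (hy z₀ hz₀)
  have hm_pos : 0 < m := pos_of_mul_pos_left ((real_inner_self_pos.2 hy₀).trans_le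
    (h.inner_div_le_of_isMaxOn_sphere hmax hy₀)) (h.pos hy₀).le
  have hgrad : m • gradient H z₀ = y := by
    have hmin : IsLocalMin (fun z ↦ m * H z - ⟪y, z⟫) z₀ := by
      filter_upwards [isOpen_compl_singleton.mem_nhds hz₀'] with z hz
      rw [hm, div_mul_cancel₀ _ hH₀.ne', sub_self]
      exact sub_nonneg.2 (h.inner_div_le_of_isMaxOn_sphere hmax hz)
    have hzero := hmin.hasFDerivAt_eq_zero
      (((h.hasFDerivAt hz₀').const_mul m).sub (innerSL ℝ y).hasFDerivAt)
    refine ext_inner_right ℝ fun w ↦ ?_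
    rw [real_inner_smul_left]
    exact sub_eq_zero.1 (DFunLike.congr_fun hzero w)
  have hc : 0 < m / H z₀ := by positivity
  have hnorm : ‖(m / H z₀) • z₀‖ = m / H z₀ := by
    rw [norm_smul, mem_sphere_zero_iff_norm.1 hz₀, mul_one, Real.norm_of_nonneg hc.le]
  refine ⟨(m / H z₀) • z₀, ⟨smul_ne_zero hc.ne' hz₀', ?_⟩, ?_⟩
  · rw [hnorm, inv_smul_smul₀ hc.ne']
    exact div_lt_div_of_pos_right hm_lt hH₀
  · rw [legendreMap, h.homog _ hc, h.gradient_smul hc, div_mul_cancel₀ _ hH₀.ne', hgrad]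

lemma volume_image_mul_volume_image_le (h : IsC2PlusSupport n H) {R R' g : Euc n → ℝ}
    (hR : Continuous fun x : sphere (0 : Euc n) 1 ↦ R x)
    (hR' : Continuous fun x : sphere (0 : Euc n) 1 ↦ R' x)
    (hg : ∀ z ∈ sphere (0 : Euc n) 1, |g z| < 1)
    (hRg : ∀ x ∈ sphere (0 : Euc n) 1, ∀ z ∈ sphere (0 : Euc n) 1,
      R x * ⟪gradient H x, z⟫ ≤ H z * (1 + g z))
    (hRg' : ∀ x ∈ sphere (0 : Euc n) 1, ∀ z ∈ sphere (0 : Euc n) 1,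
      R' x * ⟪gradient H x, z⟫ ≤ H z * (1 - g z)) :
    volume (legendreMap H '' radialDomain fun x ↦ R x / H x) ^ (1 / 2 : ℝ) *
        volume (legendreMap H '' radialDomain fun x ↦ R' x / H x) ^ (1 / 2 : ℝ) ≤
      volume (legendreMap H '' radialDomain fun x ↦ 1 / H x) := by
  have hbody : MeasurableSet (legendreMap H '' radialDomain fun x ↦ 1 / H x) :=
    h.measurableSet_image_legendreMap continuous_const
  rw [← (insert_ae_eq_self 0 (legendreMap H '' radialDomain fun x ↦ 1 / H x)).measure_eq]
  refine brunnMinkowski one_half_pos one_half_pos (add_halves 1)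
    (h.measurableSet_image_legendreMap hR) (h.measurableSet_image_legendreMap hR')
    (hbody.insert 0) fun a ha b hb ↦ ?_
  refine or_iff_not_imp_left.2 fun hne ↦ h.openWulffShape_diff_zero_subset_image ⟨?_, hne⟩
  intro z hz
  have hpos : ∀ z ∈ sphere (0 : Euc n) 1, 0 < 1 + g z ∧ 0 < 1 - g z := fun z hz ↦ by
    constructor <;> linarith [abs_lt.1 (hg z hz)]
  have haz : ⟪a, z⟫ < H z * (1 + g z) := h.image_legendreMap_subset_openWulffShape
    (fun z hz ↦ mul_pos (h.pos_of_mem_sphere z hz) (hpos z hz).1) hRg ha z hz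
  have hbz : ⟪b, z⟫ < H z * (1 - g z) := h.image_legendreMap_subset_openWulffShape
    (fun z hz ↦ mul_pos (h.pos_of_mem_sphere z hz) (hpos z hz).2) hRg' hb z hz
  rw [inner_add_left, real_inner_smul_left, real_inner_smul_left]
  linarith

lemma integral_pow_mul_integral_pow_le (h : IsC2PlusSupport n H) {R R' g : Euc n → ℝ}
    (hR : Continuous fun x : sphere (0 : Euc n) 1 ↦ R x)
    (hR' : Continuous fun x : sphere (0 : Euc n) 1 ↦ R' x)
    (hR_pos : ∀ x ∈ sphere (0 : Euc n) 1, 0 < R x)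
    (hR'_pos : ∀ x ∈ sphere (0 : Euc n) 1, 0 < R' x)
    (hg : ∀ z ∈ sphere (0 : Euc n) 1, |g z| < 1)
    (hRg : ∀ x ∈ sphere (0 : Euc n) 1, ∀ z ∈ sphere (0 : Euc n) 1,
      R x * ⟪gradient H x, z⟫ ≤ H z * (1 + g z))
    (hRg' : ∀ x ∈ sphere (0 : Euc n) 1, ∀ z ∈ sphere (0 : Euc n) 1,
      R' x * ⟪gradient H x, z⟫ ≤ H z * (1 - g z)) :
    (∫ x : sphere (0 : Euc n) 1, volDens n H x * R x ^ (n + 1) ∂sphMeasure n) *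
        (∫ x : sphere (0 : Euc n) 1, volDens n H x * R' x ^ (n + 1) ∂sphMeasure n) ≤
      (∫ x : sphere (0 : Euc n) 1, volDens n H x ∂sphMeasure n) ^ 2 := by
  have hnonneg : ∀ {ρ : Euc n → ℝ}, (∀ x ∈ sphere (0 : Euc n) 1, 0 < ρ x) →
      0 ≤ ∫ x : sphere (0 : Euc n) 1, volDens n H x * ρ x ^ (n + 1) ∂sphMeasure n := fun hρ ↦
    integral_nonneg fun x ↦ mul_nonneg (h.volDens_pos x.2).le (pow_nonneg (hρ x x.2).le _)
  have hR_int := hnonneg hR_pos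
  have hR'_int := hnonneg hR'_pos
  have hvol := h.volume_image_mul_volume_image_le hR hR' hg hRg hRg'
  rw [h.volume_image_legendreMap hR hR_pos, h.volume_image_legendreMap hR' hR'_pos,
    h.volume_image_legendreMap continuous_const (fun _ _ ↦ one_pos),
    ENNReal.ofReal_rpow_of_nonneg (by positivity) (by norm_num),
    ENNReal.ofReal_rpow_of_nonneg (by positivity) (by norm_num),
    ← ENNReal.ofReal_mul (by positivity), ← Real.mul_rpow (by positivity) (by positivity),
    ← Real.sqrt_eq_rpow] at hvol
  simp only [one_pow, mul_one] at hvol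
  have hV : 0 ≤ ∫ x : sphere (0 : Euc n) 1, volDens n H x ∂sphMeasure n :=
    integral_nonneg fun x ↦ (h.volDens_pos x.2).le
  rw [ENNReal.ofReal_le_ofReal_iff (by positivity), Real.sqrt_le_left (by positivity),
    div_mul_div_comm, div_pow, ← sq, div_le_div_iff_of_pos_right (by positivity)] at hvol
  exact hvol

end IsC2PlusSupport

end BrunnMinkowskiOnSphere

section Taylor

open Asymptotics
open scoped Topology

variable {E F : Type*} [NormedAddCommGroup E] [NormedSpace ℝ E] [NormedAddCommGroup F]
  [NormedSpace ℝ F]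

lemma norm_taylor_two_le_of_segment {f : E → F} {f' : E → E →L[ℝ] F} {f'' : E →L[ℝ] E →L[ℝ] F}
    {x w : E} {κ : ℝ} (hκ : 0 ≤ κ)
    (hf : ∀ τ ∈ Set.Icc (0 : ℝ) 1, HasFDerivAt f (f' (x + τ • w)) (x + τ • w))
    (hf' : ∀ τ ∈ Set.Icc (0 : ℝ) 1, ‖f' (x + τ • w) - f' x - f'' (τ • w)‖ ≤ κ * ‖τ • w‖) :
    ‖f (x + w) - f x - f' x w - (2⁻¹ : ℝ) • f'' w w‖ ≤ κ * ‖w‖ ^ 2 := by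
  have hderiv : ∀ τ ∈ Set.Icc (0 : ℝ) 1,
      HasDerivAt (fun τ : ℝ ↦ f (x + τ • w) - τ • f' x w - (τ ^ 2 / 2) • f'' w w)
        ((f' (x + τ • w) - f' x - f'' (τ • w)) w) τ := fun τ hτ ↦ by
    have hline : HasDerivAt (fun τ : ℝ ↦ x + τ • w) w τ := by
      simpa using ((hasDerivAt_id τ).smul_const w).const_add x
    have hlin : HasDerivAt (fun τ : ℝ ↦ τ • f' x w) (f' x w) τ := by
      simpa using (hasDerivAt_id τ).smul_const (f' x w)
    have hquad : HasDerivAt (fun τ : ℝ ↦ (τ ^ 2 / 2) • f'' w w) (f'' (τ • w) w) τ := by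
      simpa using ((hasDerivAt_pow 2 τ).div_const 2).smul_const (f'' w w)
    exact (((hf τ hτ).comp_hasDerivAt τ hline).sub hlin).sub hquad
  have hbound : ∀ τ ∈ Set.Ico (0 : ℝ) 1,
      ‖(f' (x + τ • w) - f' x - f'' (τ • w)) w‖ ≤ κ * ‖w‖ ^ 2 := fun τ hτ ↦ by
    calc ‖(f' (x + τ • w) - f' x - f'' (τ • w)) w‖ ≤ κ * ‖τ • w‖ * ‖w‖ :=
          ContinuousLinearMap.le_of_opNorm_le _ (hf' τ (Set.Ico_subset_Icc_self hτ)) w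
      _ ≤ κ * (1 * ‖w‖) * ‖w‖ := by
          rw [norm_smul, Real.norm_of_nonneg hτ.1]
          gcongr
          exact hτ.2.le
      _ = κ * ‖w‖ ^ 2 := by ring
  have h := norm_image_sub_le_of_norm_deriv_le_segment_01'
    (fun τ hτ ↦ (hderiv τ hτ).hasDerivWithinAt) hbound
  convert h using 2
  simp only [one_smul, zero_smul, add_zero, one_pow, ne_eq, OfNat.ofNat_ne_zero, not_false_eq_true,
    zero_pow, zero_div, sub_zero, one_div]
  abel

lemma isLittleO_taylor_two {f : E → F} {x₀ : E} (hf : ContDiffAt ℝ 2 f x₀) :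
    (fun p : E × E ↦ f p.2 - f p.1 - fderiv ℝ f p.1 (p.2 - p.1) -
        (2⁻¹ : ℝ) • fderiv ℝ (fderiv ℝ f) x₀ (p.2 - p.1) (p.2 - p.1))
      =o[𝓝 (x₀, x₀)] fun p ↦ ‖p.2 - p.1‖ ^ 2 := by
  refine isLittleO_iff.2 fun κ hκ ↦ ?_
  have hdiff : ∀ᶠ x in 𝓝 x₀, HasFDerivAt f (fderiv ℝ f x) x :=
    (hf.eventually (by simp)).mono fun x hx ↦ (hx.differentiableAt two_ne_zero).hasFDerivAt
  have hstrict := (hf.fderiv_right (m := 1) (by norm_num)).hasStrictFDerivAt one_ne_zero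
  obtain ⟨ε, hε, hball⟩ := Metric.eventually_nhds_iff_ball.1
    ((hstrict.isLittleO.def hκ).and (continuousAt_fst.eventually hdiff))
  filter_upwards [ball_mem_nhds (x₀, x₀) hε] with ⟨x, z⟩ hp
  rw [← ball_prod_same] at hp hball
  have hsegment : ∀ τ ∈ Set.Icc (0 : ℝ) 1, (x + τ • (z - x), x) ∈ ball x₀ ε ×ˢ ball x₀ ε :=
    fun τ hτ ↦ ⟨(convex_ball x₀ ε).add_smul_sub_mem hp.1 hp.2 hτ, hp.1⟩
  have h := norm_taylor_two_le_of_segment hκ.le (fun τ hτ ↦ (hball _ (hsegment τ hτ)).2)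
    (fun τ hτ ↦ by simpa using (hball _ (hsegment τ hτ)).1)
  simpa using h

end Taylor

section LocalInclusion

open Asymptotics
open scoped Topology

lemma quadratic_nonneg_of_discrim_nonpos {a b c : ℝ} (ha : 0 < a) (h : discrim a b c ≤ 0) (t : ℝ) :
    0 ≤ a * t ^ 2 + b * t + c := by
  rw [discrim] at h
  refine nonneg_of_mul_nonneg_right (a := 4 * a) ?_ (by positivity)
  calc 0 ≤ (2 * a * t + b) ^ 2 + (4 * a * c - b ^ 2) := by
        have := sq_nonneg (2 * a * t + b)
        linarith
    _ = 4 * a * (a * t ^ 2 + b * t + c) := by ring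

lemma isLittleO_inner_sub_nhdsWithin_sphere {E : Type*} [NormedAddCommGroup E]
    [InnerProductSpace ℝ E] (x₀ : E) (r : ℝ) :
    (fun p : E × E ↦ ⟪x₀, p.2 - p.1⟫) =o[𝓝[sphere 0 r ×ˢ sphere 0 r] (x₀, x₀)]
      fun p ↦ ‖p.2 - p.1‖ := by
  have hbound : ∀ᶠ p : E × E in 𝓝[sphere 0 r ×ˢ sphere 0 r] (x₀, x₀),
      ‖⟪x₀, p.2 - p.1⟫‖ ≤ 1 * ‖‖x₀ - (2⁻¹ : ℝ) • (p.2 + p.1)‖ * ‖p.2 - p.1‖‖ := by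
    filter_upwards [self_mem_nhdsWithin] with p hp
    have hperp : ⟪p.2 + p.1, p.2 - p.1⟫ = 0 := by
      rw [real_inner_add_sub_eq_zero_iff, mem_sphere_zero_iff_norm.1 hp.1,
        mem_sphere_zero_iff_norm.1 hp.2]
    rw [one_mul, norm_mul, norm_norm, norm_norm]
    simpa only [inner_sub_left, real_inner_smul_left, hperp, mul_zero, sub_zero] using
      norm_inner_le_norm (𝕜 := ℝ) (x₀ - (2⁻¹ : ℝ) • (p.2 + p.1)) (p.2 - p.1)
  have hmid : Filter.Tendsto (fun p : E × E ↦ ‖x₀ - (2⁻¹ : ℝ) • (p.2 + p.1)‖)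
      (𝓝[sphere 0 r ×ˢ sphere 0 r] (x₀, x₀)) (𝓝 0) := by
    have hcont : Continuous fun p : E × E ↦ ‖x₀ - (2⁻¹ : ℝ) • (p.2 + p.1)‖ := by fun_prop
    convert (hcont.tendsto (x₀, x₀)).mono_left nhdsWithin_le_nhds using 2
    rw [← two_smul ℝ x₀, inv_smul_smul₀ two_ne_zero, sub_self, norm_zero]
  simpa using (IsBigO.of_bound 1 hbound).trans_isLittleO
    (((isLittleO_one_iff ℝ).2 hmid).mul_isBigO (isBigO_refl _ _))

variable {n : ℕ}

/-- The second-order expansion of the factor by which the boundary point of the body with outer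
normal `x` may be dilated inside the Wulff shape of `H (1 + t F)`, when `∇F = D²H(v)`. -/
def dilationFactor (H F : Euc n → ℝ) (v : Euc n → Euc n) (η t : ℝ) (x : Euc n) : ℝ :=
  1 + t * F x - t ^ 2 / 2 * (H x * ⟪hessianMap H x (v x), v x⟫ + η)

namespace IsC2PlusSupport

variable {H F : Euc n → ℝ}

lemma isLittleO_support_gap (h : IsC2PlusSupport n H) {x₀ : Euc n} (hx₀ : x₀ ≠ 0) :
    (fun p : Euc n × Euc n ↦ (H p.2 - ⟪gradient H p.1, p.2⟫) -
        2⁻¹ * ⟪hessianMap H x₀ (p.2 - p.1), p.2 - p.1⟫)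
      =o[𝓝 (x₀, x₀)] fun p ↦ ‖p.2 - p.1‖ ^ 2 := by
  refine (isLittleO_taylor_two (h.contDiffAt hx₀)).congr' ?_ .rfl
  filter_upwards [continuousAt_fst.eventually_ne hx₀] with p hp
  rw [fderiv_fderiv_apply_eq_inner_hessianMap, ← inner_gradient_left, inner_sub_right,
    h.inner_gradient_self hp, smul_eq_mul]
  ring

lemma inner_hessianMap_sq_le (h : IsC2PlusSupport n H) {x : Euc n} (hx : x ≠ 0) (v w : Euc n) :
    ⟪hessianMap H x v, w⟫ ^ 2 ≤ ⟪hessianMap H x v, v⟫ * ⟪hessianMap H x w, w⟫ := by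
  have hdiscrim : discrim ⟪hessianMap H x v, v⟫ (2 * ⟪hessianMap H x v, w⟫)
      ⟪hessianMap H x w, w⟫ ≤ 0 := discrim_le_zero fun t ↦ by
    have hnonneg := h.inner_hessianMap_self_nonneg hx (t • v + w)
    simp only [map_add, map_smul, inner_add_left, inner_add_right, real_inner_smul_left,
      real_inner_smul_right, inner_hessianMap_comm (h.contDiffAt hx) w v] at hnonneg
    linarith
  rw [discrim] at hdiscrim
  linarith

lemma exists_pos_mul_norm_sq_le_inner_hessianMap (h : IsC2PlusSupport n H) {x₀ : Euc n}
    (hx₀ : x₀ ∈ sphere (0 : Euc n) 1) :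
    ∃ c > 0, ∀ᶠ p : Euc n × Euc n in 𝓝[sphere 0 1 ×ˢ sphere 0 1] (x₀, x₀),
      c * ‖p.2 - p.1‖ ^ 2 ≤ ⟪hessianMap H x₀ (p.2 - p.1), p.2 - p.1⟫ := by
  obtain ⟨c, hc, hcoercive⟩ := exists_pos_mul_norm_sq_le
    (Q := fun w : Euc n ↦ ⟪hessianMap H x₀ w, w⟫ + H x₀ * ⟪x₀, w⟫ ^ 2) (by fun_prop)
    (fun a w ↦ by simp only [map_smul, real_inner_smul_left, real_inner_smul_right]; ring)
    (fun w hw ↦ h.inner_hessianMap_self_add_pos hx₀ hw)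
  have hsmall := ((isLittleO_inner_sub_nhdsWithin_sphere x₀ 1).pow two_pos).const_mul_left (H x₀)
  refine ⟨c / 2, half_pos hc, ?_⟩
  filter_upwards [hsmall.def (half_pos hc)] with p hp
  rw [Real.norm_of_nonneg (mul_nonneg (h.pos_of_mem_sphere x₀ hx₀).le (sq_nonneg _)),
    norm_pow, norm_norm] at hp
  linarith [hcoercive (p.2 - p.1)]

lemma isLittleO_mul_sub_sq_sub_support_gap (h : IsC2PlusSupport n H) {x₀ a : Euc n}
    (hx₀ : x₀ ≠ 0) (hF : HasStrictFDerivAt F (innerSL ℝ a) x₀) (γ : ℝ) :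
    (fun p : Euc n × Euc n ↦ H p.2 * (F p.2 - F p.1) ^ 2 -
        2 * γ * (H p.2 - ⟪gradient H p.1, p.2⟫) -
        (H x₀ * ⟪a, p.2 - p.1⟫ ^ 2 - γ * ⟪hessianMap H x₀ (p.2 - p.1), p.2 - p.1⟫))
      =o[𝓝 (x₀, x₀)] fun p ↦ ‖p.2 - p.1‖ ^ 2 := by
  have hrem : (fun p : Euc n × Euc n ↦ F p.2 - F p.1 - ⟪a, p.2 - p.1⟫)
      =o[𝓝 (x₀, x₀)] fun p ↦ ‖p.2 - p.1‖ :=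
    (hF.isLittleO.comp_tendsto (continuous_swap.tendsto (x₀, x₀))).norm_right
  have hlin : (fun p : Euc n × Euc n ↦ ⟪a, p.2 - p.1⟫) =O[𝓝 (x₀, x₀)] fun p ↦ ‖p.2 - p.1‖ :=
    ((innerSL ℝ a).isBigO_comp (fun p : Euc n × Euc n ↦ p.2 - p.1) _).norm_right
  have hsub : (fun p : Euc n × Euc n ↦ F p.2 - F p.1) =O[𝓝 (x₀, x₀)] fun p ↦ ‖p.2 - p.1‖ := by
    simpa using hrem.isBigO.add hlin
  have hcont : (fun p : Euc n × Euc n ↦ H p.2 - H x₀) =o[𝓝 (x₀, x₀)] fun _ ↦ (1 : ℝ) := by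
    refine (isLittleO_one_iff ℝ).2 (tendsto_sub_nhds_zero_iff.2 ?_)
    exact (h.contDiffAt hx₀).continuousAt.tendsto.comp continuousAt_snd
  have hweight : (fun p : Euc n × Euc n ↦ (H p.2 - H x₀) * (F p.2 - F p.1) ^ 2)
      =o[𝓝 (x₀, x₀)] fun p ↦ ‖p.2 - p.1‖ ^ 2 := by
    simpa using hcont.mul_isBigO (hsub.pow 2)
  have hsquare : (fun p : Euc n × Euc n ↦ H x₀ * ((F p.2 - F p.1 - ⟪a, p.2 - p.1⟫) *
      (F p.2 - F p.1 + ⟪a, p.2 - p.1⟫))) =o[𝓝 (x₀, x₀)] fun p ↦ ‖p.2 - p.1‖ ^ 2 := by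
    simpa only [sq] using (hrem.mul_isBigO (hsub.add hlin)).const_mul_left (H x₀)
  exact ((hweight.add hsquare).sub
    ((h.isLittleO_support_gap hx₀).const_mul_left (2 * γ))).congr_left fun p ↦ by ring

lemma eventually_mul_sub_sq_le_support_gap (h : IsC2PlusSupport n H) {x₀ v : Euc n} {γ : ℝ}
    (hx₀ : x₀ ∈ sphere (0 : Euc n) 1)
    (hF : HasStrictFDerivAt F (innerSL ℝ (hessianMap H x₀ v)) x₀)
    (hγ : H x₀ * ⟪hessianMap H x₀ v, v⟫ < γ) :
    ∀ᶠ p : Euc n × Euc n in 𝓝[sphere 0 1 ×ˢ sphere 0 1] (x₀, x₀),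
      H p.2 * (F p.2 - F p.1) ^ 2 ≤ 2 * γ * (H p.2 - ⟪gradient H p.1, p.2⟫) := by
  have hne := ne_zero_of_mem_sphere_zero_one hx₀
  obtain ⟨c, hc, hcoercive⟩ := h.exists_pos_mul_norm_sq_le_inner_hessianMap hx₀
  have hexpand := (h.isLittleO_mul_sub_sq_sub_support_gap hne hF γ).def
    (mul_pos (sub_pos.2 hγ) hc)
  filter_upwards [hcoercive, nhdsWithin_le_nhds hexpand] with p hp hle
  rw [norm_pow, norm_norm] at hle
  have hcauchy := mul_le_mul_of_nonneg_left (h.inner_hessianMap_sq_le hne v (p.2 - p.1))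
    (h.pos hne).le
  have hquad := mul_le_mul_of_nonneg_left hp (sub_pos.2 hγ).le
  linarith [le_of_abs_le hle]

variable {v : Euc n → Euc n} {η : ℝ}

lemma continuous_mul_inner_hessianMap_self (h : IsC2PlusSupport n H)
    (hv : Continuous fun x : sphere (0 : Euc n) 1 ↦ v x) :
    Continuous fun x : sphere (0 : Euc n) 1 ↦ H x * ⟪hessianMap H x (v x), v x⟫ :=
  h.continuous_sphere.mul ((h.continuous_hessianMap_sphere.clm_apply hv).inner hv)

lemma continuous_dilationFactor (h : IsC2PlusSupport n H)
    (hF : Continuous fun x : sphere (0 : Euc n) 1 ↦ F x)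
    (hv : Continuous fun x : sphere (0 : Euc n) 1 ↦ v x) (η : ℝ) :
    Continuous fun p : ℝ × sphere (0 : Euc n) 1 ↦ dilationFactor H F v η p.1 p.2 := by
  have hF' := hF.comp (continuous_snd (X := ℝ))
  have hq := (h.continuous_mul_inner_hessianMap_self hv).comp (continuous_snd (X := ℝ))
  exact (continuous_const.add (continuous_fst.mul hF')).sub
    (((continuous_fst.pow 2).div_const 2).mul (hq.add continuous_const))

-- The inequality says that a quadratic polynomial in `t` is nonnegative, and `hgap`, `hγ` bound its
-- discriminant.
lemma dilationFactor_mul_inner_le {x z : Euc n} {γ t : ℝ} (hz : 0 < H z)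
    (hQ : 0 < H x * ⟪hessianMap H x (v x), v x⟫ + η)
    (hγ : γ ≤ (H x * ⟪hessianMap H x (v x), v x⟫ + η) * dilationFactor H F v η t x)
    (hG : 0 ≤ H z - ⟪gradient H x, z⟫)
    (hgap : H z * (F z - F x) ^ 2 ≤ 2 * γ * (H z - ⟪gradient H x, z⟫)) :
    dilationFactor H F v η t x * ⟪gradient H x, z⟫ ≤ H z * (1 + t * F z) := by
  have hnonneg := quadratic_nonneg_of_discrim_nonpos
    (a := H z * (H x * ⟪hessianMap H x (v x), v x⟫ + η) / 2) (b := H z * (F z - F x))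
    (c := dilationFactor H F v η t x * (H z - ⟪gradient H x, z⟫)) (by positivity) ?_ t
  · have hR : dilationFactor H F v η t x =
      1 + t * F x - t ^ 2 / 2 * (H x * ⟪hessianMap H x (v x), v x⟫ + η) := rfl
    rw [← sub_nonneg]
    convert hnonneg using 1
    linear_combination -H z * hR
  · rw [discrim, sub_nonpos]
    have hγG := mul_le_mul_of_nonneg_left (hgap.trans
      (mul_le_mul_of_nonneg_right (mul_le_mul_of_nonneg_left hγ zero_le_two) hG)) hz.le
    linarith

lemma eventually_dilationFactor_mul_inner_le_nhds_diag (h : IsC2PlusSupport n H)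
    (hF : ∀ x ∈ sphere (0 : Euc n) 1, HasStrictFDerivAt F (innerSL ℝ (hessianMap H x (v x))) x)
    (hv : Continuous fun x : sphere (0 : Euc n) 1 ↦ v x) (hη : 0 < η)
    (x₀ : sphere (0 : Euc n) 1) :
    ∀ᶠ p : ℝ × (sphere (0 : Euc n) 1 × sphere (0 : Euc n) 1) in 𝓝 (0, (x₀, x₀)),
      dilationFactor H F v η p.1 p.2.1 * ⟪gradient H p.2.1, p.2.2⟫ ≤
        H p.2.2 * (1 + p.1 * F p.2.2) := by
  have hF_cont : Continuous fun x : sphere (0 : Euc n) 1 ↦ F x :=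
    continuous_iff_continuousAt.2 fun x ↦ (hF x x.2).continuousAt.comp continuousAt_subtype_val
  have hR := (h.continuous_dilationFactor hF_cont hv η).comp
    (continuous_fst.prodMk (continuous_fst.comp continuous_snd) :
      Continuous fun p : ℝ × (sphere (0 : Euc n) 1 × sphere (0 : Euc n) 1) ↦ (p.1, p.2.1))
  have hq := (h.continuous_mul_inner_hessianMap_self hv).comp (continuous_fst.comp continuous_snd :
      Continuous fun p : ℝ × (sphere (0 : Euc n) 1 × sphere (0 : Euc n) 1) ↦ p.2.1)
  simp only [Function.comp_def] at hR hq
  set q₀ := H x₀ * ⟪hessianMap H x₀ (v x₀), v x₀⟫ with hq₀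
  have hγ := (continuous_const (y := q₀ + η / 2)).continuousAt.eventually_lt
    (((hq.add (continuous_const (y := η))).mul hR).continuousAt (x := (0, (x₀, x₀))))
    (by simp [dilationFactor, ← hq₀, hη])
  have hcoe : Filter.Tendsto (fun p : ℝ × (sphere (0 : Euc n) 1 × sphere (0 : Euc n) 1) ↦
      ((p.2.1 : Euc n), (p.2.2 : Euc n))) (𝓝 (0, (x₀, x₀)))
      (𝓝[sphere 0 1 ×ˢ sphere 0 1] ((x₀ : Euc n), (x₀ : Euc n))) :=
    tendsto_nhdsWithin_iff.2 ⟨Continuous.tendsto (by fun_prop) _,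
      .of_forall fun p ↦ ⟨p.2.1.2, p.2.2.2⟩⟩
  have hgap := hcoe.eventually (h.eventually_mul_sub_sq_le_support_gap x₀.2 (hF x₀ x₀.2)
    (lt_add_of_pos_right q₀ (half_pos hη)))
  filter_upwards [hγ, hgap] with p hpγ hpgap
  have hx := ne_zero_of_mem_sphere_zero_one p.2.1.2
  have hz := h.pos_of_mem_sphere _ p.2.2.2
  exact dilationFactor_mul_inner_le hz
    (add_pos_of_nonneg_of_pos (mul_nonneg (h.pos hx).le (h.inner_hessianMap_self_nonneg hx _)) hη)
    hpγ.le (sub_nonneg.2 (h.inner_gradient_le hx _)) hpgap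

theorem eventually_dilationFactor_mul_inner_le (h : IsC2PlusSupport n H)
    (hF : ∀ x ∈ sphere (0 : Euc n) 1, HasStrictFDerivAt F (innerSL ℝ (hessianMap H x (v x))) x)
    (hv : Continuous fun x : sphere (0 : Euc n) 1 ↦ v x) (hη : 0 < η) :
    ∀ᶠ t : ℝ in 𝓝 0, ∀ x ∈ sphere (0 : Euc n) 1, ∀ z ∈ sphere (0 : Euc n) 1,
      dilationFactor H F v η t x * ⟪gradient H x, z⟫ ≤ H z * (1 + t * F z) := by
  have hF_cont : Continuous fun x : sphere (0 : Euc n) 1 ↦ F x :=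
    continuous_iff_continuousAt.2 fun x ↦ (hF x x.2).continuousAt.comp continuousAt_subtype_val
  suffices hpairs : ∀ᶠ t : ℝ in 𝓝 0, ∀ p ∈ (Set.univ :
      Set (sphere (0 : Euc n) 1 × sphere (0 : Euc n) 1)),
      dilationFactor H F v η t p.1 * ⟪gradient H p.1, p.2⟫ ≤ H p.2 * (1 + t * F p.2) from
    hpairs.mono fun t ht x hx z hz ↦ ht (⟨x, hx⟩, ⟨z, hz⟩) (Set.mem_univ _)
  refine isCompact_univ.eventually_forall_of_forall_eventually ?_
  rintro ⟨x₀, z₀⟩ -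
  rcases eq_or_ne x₀ z₀ with rfl | hne
  · exact h.eventually_dilationFactor_mul_inner_le_nhds_diag hF hv hη x₀
  have hlhs : Continuous fun p : ℝ × (sphere (0 : Euc n) 1 × sphere (0 : Euc n) 1) ↦
      dilationFactor H F v η p.1 p.2.1 * ⟪gradient H p.2.1, (p.2.2 : Euc n)⟫ :=
    ((h.continuous_dilationFactor hF_cont hv η).comp
      (continuous_fst.prodMk (continuous_fst.comp continuous_snd))).mul
      ((h.continuous_gradient_sphere.comp (continuous_fst.comp continuous_snd)).inner
        (continuous_subtype_val.comp (continuous_snd.comp continuous_snd)))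
  have hrhs : Continuous fun p : ℝ × (sphere (0 : Euc n) 1 × sphere (0 : Euc n) 1) ↦
      H p.2.2 * (1 + p.1 * F p.2.2) :=
    (h.continuous_sphere.comp (continuous_snd.comp continuous_snd)).mul
      (continuous_const.add (continuous_fst.mul
        (hF_cont.comp (continuous_snd.comp continuous_snd))))
  refine (hlhs.continuousAt.eventually_lt hrhs.continuousAt ?_).mono fun p hp ↦ hp.le
  simpa [dilationFactor] using h.inner_gradient_lt x₀.2 z₀.2 (Subtype.coe_ne_coe.2 hne)

end IsC2PlusSupport

end LocalInclusion

section SecondVariation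

open scoped Topology

lemma exists_continuous_one_add_pow_eq (N : ℕ) :
    ∃ p : ℝ → ℝ, Continuous p ∧ p 0 = N * (N - 1) / 2 ∧
      ∀ y, (1 + y) ^ N = 1 + N * y + y ^ 2 * p y := by
  induction N with
  | zero => exact ⟨0, continuous_zero, by simp, by simp⟩
  | succ N ih =>
    obtain ⟨p, hp, hp₀, hpow⟩ := ih
    refine ⟨fun y ↦ (1 + y) * p y + N, by fun_prop, ?_, fun y ↦ ?_⟩
    · push_cast
      rw [hp₀]
      ring
    · push_cast
      rw [pow_succ, hpow]
      ring

variable {Ω : Type*} [TopologicalSpace Ω] [CompactSpace Ω] [MeasurableSpace Ω]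
  [OpensMeasurableSpace Ω] {μ : Measure Ω} [IsFiniteMeasure μ] {D F b : Ω → ℝ}

lemma exists_continuous_integral_mul_pow_eq (hD : Continuous D) (hF : Continuous F)
    (hb : Continuous b) (N : ℕ) :
    ∃ S : ℝ → ℝ, Continuous S ∧
      S 0 = N * (N - 1) / 2 * ∫ x, D x * F x ^ 2 ∂μ - N * ∫ x, D x * b x ∂μ ∧
      ∀ t, ∫ x, D x * (1 + t * F x - t ^ 2 * b x) ^ N ∂μ =
        ∫ x, D x ∂μ + N * t * ∫ x, D x * F x ∂μ + t ^ 2 * S t := by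
  have hint : ∀ {f : Ω → ℝ}, Continuous f → Integrable f μ := fun hf ↦
    hf.integrable_of_hasCompactSupport (.of_compactSpace _)
  obtain ⟨p, hp, hp₀, hpow⟩ := exists_continuous_one_add_pow_eq N
  let s : ℝ → Ω → ℝ := fun t x ↦
    D x * (F x - t * b x) ^ 2 * p (t * (F x - t * b x)) - N * (D x * b x)
  have hs : Continuous s.uncurry := by fun_prop
  refine ⟨fun t ↦ ∫ x, s t x ∂μ, ?_, ?_, fun t ↦ ?_⟩
  · simpa only [setIntegral_univ] using
      continuous_parametric_integral_of_continuous (μ := μ) hs isCompact_univ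
  · rw [← integral_const_mul, ← integral_const_mul,
      ← integral_sub (hint (by fun_prop)) (hint (by fun_prop))]
    refine integral_congr_ae (.of_forall fun x ↦ ?_)
    simp only [s, zero_mul, sub_zero, hp₀]
    ring
  · rw [← integral_const_mul, ← integral_const_mul,
      ← integral_add (hint hD) (hint (by fun_prop)),
      ← integral_add (hint (by fun_prop)) (hint (by fun_prop))]
    congr with x
    rw [show 1 + t * F x - t ^ 2 * b x = 1 + t * (F x - t * b x) by ring, hpow]
    simp only [s]
    ring

lemma nonpos_of_eventually_mul_le_sq {V : ℝ} {S : ℝ → ℝ} (hV : 0 ≤ V) (hS : ContinuousAt S 0)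
    (hle : ∀ᶠ t in 𝓝 0, (V + t ^ 2 * S t) * (V + t ^ 2 * S (-t)) ≤ V ^ 2) : S 0 ≤ 0 := by
  by_contra! hpos
  have hS_pos : ∀ᶠ t in 𝓝 0, 0 < S t := hS.eventually_const_lt hpos
  have hS_neg_pos : ∀ᶠ t in 𝓝 0, 0 < S (-t) :=
    (continuous_neg.tendsto' (0 : ℝ) 0 neg_zero).eventually hS_pos
  obtain ⟨t, ⟨⟨hle, hpos⟩, hneg⟩, ht⟩ :=
    ((((hle.and hS_pos).and hS_neg_pos).filter_mono nhdsWithin_le_nhds).and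
      (self_mem_nhdsWithin (s := {0}ᶜ))).exists
  have ht : 0 < t ^ 2 := sq_pos_of_ne_zero ht
  have hgt := mul_lt_mul'' (lt_add_of_pos_right V (mul_pos ht hpos))
    (lt_add_of_pos_right V (mul_pos ht hneg)) hV hV
  exact (hgt.trans_le hle).ne (sq V).symm

lemma integral_mul_sq_le_of_eventually_integral_pow_le (hD : Continuous D) (hF : Continuous F)
    (hb : Continuous b) (hD_nonneg : ∀ x, 0 ≤ D x) {n : ℕ} (hDF : ∫ x, D x * F x ∂μ = 0)
    (hle : ∀ᶠ t : ℝ in 𝓝 0, (∫ x, D x * (1 + t * F x - t ^ 2 * b x) ^ (n + 1) ∂μ) *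
      (∫ x, D x * (1 + -t * F x - (-t) ^ 2 * b x) ^ (n + 1) ∂μ) ≤ (∫ x, D x ∂μ) ^ 2) :
    n * ∫ x, D x * F x ^ 2 ∂μ ≤ 2 * ∫ x, D x * b x ∂μ := by
  obtain ⟨S, hS, hS₀, hexpand⟩ := exists_continuous_integral_mul_pow_eq (μ := μ) hD hF hb (n + 1)
  simp only [hexpand, hDF, mul_zero, add_zero] at hle
  simp only [neg_sq] at hle
  have hnonpos := nonpos_of_eventually_mul_le_sq (integral_nonneg hD_nonneg) hS.continuousAt hle
  rw [hS₀] at hnonpos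
  push_cast at hnonpos
  refine le_of_mul_le_mul_left (a := ((n : ℝ) + 1) / 2) ?_ (by positivity)
  linarith

end SecondVariation

section Variance

variable {Ω : Type*} [MeasurableSpace Ω] {μ : Measure Ω} {D F : Ω → ℝ}

lemma integral_mul_sub_mean (hD : Integrable D μ) (hDF : Integrable (fun x ↦ D x * F x) μ)
    (hV : ∫ x, D x ∂μ ≠ 0) :
    ∫ x, D x * (F x - (∫ y, D y * F y ∂μ) / ∫ y, D y ∂μ) ∂μ = 0 := by
  simp only [mul_sub]
  rw [integral_sub hDF (hD.mul_const _), integral_mul_const, mul_div_cancel₀ _ hV, sub_self]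

lemma integral_mul_sub_mean_sq (hD : Integrable D μ) (hDF : Integrable (fun x ↦ D x * F x) μ)
    (hDF_sq : Integrable (fun x ↦ D x * F x ^ 2) μ) (hV : ∫ x, D x ∂μ ≠ 0) :
    ∫ x, D x * (F x - (∫ y, D y * F y ∂μ) / ∫ y, D y ∂μ) ^ 2 ∂μ =
      ∫ x, D x * F x ^ 2 ∂μ - (∫ x, D x * F x ∂μ) ^ 2 / ∫ x, D x ∂μ := by
  set c := (∫ y, D y * F y ∂μ) / ∫ y, D y ∂μ with hc
  have hexpand : ∀ x, D x * (F x - c) ^ 2 =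
      D x * F x ^ 2 - (2 * c * (D x * F x) - c ^ 2 * D x) := fun x ↦ by ring
  have hlinear : Integrable (fun x ↦ 2 * c * (D x * F x) - c ^ 2 * D x) μ :=
    (hDF.const_mul _).sub (hD.const_mul _)
  simp only [hexpand]
  rw [integral_sub hDF_sq hlinear,
    integral_sub (hDF.const_mul _) (hD.const_mul _), integral_const_mul, integral_const_mul, hc]
  field_simp
  ring

end Variance

section Poincare

open scoped Topology

variable {n : ℕ} {H F : Euc n → ℝ} {v : Euc n → Euc n}

lemma eventually_forall_abs_mul_lt_one
    (hF : Continuous fun x : sphere (0 : Euc n) 1 ↦ F x) :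
    ∀ᶠ t : ℝ in 𝓝 0, ∀ x ∈ sphere (0 : Euc n) 1, |t * F x| < 1 := by
  suffices h : ∀ᶠ t : ℝ in 𝓝 0, ∀ x ∈ (Set.univ : Set (sphere (0 : Euc n) 1)), |t * F x| < 1 from
    h.mono fun t ht x hx ↦ ht ⟨x, hx⟩ (Set.mem_univ _)
  refine isCompact_univ.eventually_forall_of_forall_eventually fun x _ ↦ ?_
  have hcont : Continuous fun p : ℝ × sphere (0 : Euc n) 1 ↦ |p.1 * F p.2| :=
    (continuous_fst.mul (hF.comp continuous_snd)).abs
  exact hcont.continuousAt.eventually_lt_const (by simp)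

namespace IsC2PlusSupport

lemma integral_volDens_pos (h : IsC2PlusSupport n H) :
    0 < ∫ x : sphere (0 : Euc n) 1, volDens n H x ∂sphMeasure n := by
  have : (sphMeasure n).IsOpenPosMeasure := Measure.toSphere.instIsOpenPosMeasure _
  obtain ⟨x₀, hx₀⟩ := NormedSpace.sphere_nonempty (x := (0 : Euc n)).2 zero_le_one
  exact integral_pos_of_integrable_nonneg_nonzero h.continuous_volDens_sphere
    (integrable_sphMeasure_of_continuous h.continuous_volDens_sphere)
    (fun x ↦ (h.volDens_pos x.2).le) (x := ⟨x₀, hx₀⟩) (h.volDens_pos hx₀).ne'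

lemma eventually_dilationFactor_pos (h : IsC2PlusSupport n H)
    (hF : Continuous fun x : sphere (0 : Euc n) 1 ↦ F x)
    (hv : Continuous fun x : sphere (0 : Euc n) 1 ↦ v x) (η : ℝ) :
    ∀ᶠ t : ℝ in 𝓝 0, ∀ x ∈ sphere (0 : Euc n) 1, 0 < dilationFactor H F v η t x := by
  suffices hpos : ∀ᶠ t : ℝ in 𝓝 0, ∀ x ∈ (Set.univ : Set (sphere (0 : Euc n) 1)),
      0 < dilationFactor H F v η t x from
    hpos.mono fun t ht x hx ↦ ht ⟨x, hx⟩ (Set.mem_univ _)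
  refine isCompact_univ.eventually_forall_of_forall_eventually fun x _ ↦ ?_
  exact (h.continuous_dilationFactor hF hv η).continuousAt.eventually_const_lt
    (by simp [dilationFactor])

lemma eventually_integral_dilationFactor_pow_mul_le (h : IsC2PlusSupport n H)
    (hF : ∀ x ∈ sphere (0 : Euc n) 1, HasStrictFDerivAt F (innerSL ℝ (hessianMap H x (v x))) x)
    (hv : Continuous fun x : sphere (0 : Euc n) 1 ↦ v x) {η : ℝ} (hη : 0 < η) :
    ∀ᶠ t : ℝ in 𝓝 0,
      (∫ x : sphere (0 : Euc n) 1,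
        volDens n H x * dilationFactor H F v η t x ^ (n + 1) ∂sphMeasure n) *
      (∫ x : sphere (0 : Euc n) 1,
        volDens n H x * dilationFactor H F v η (-t) x ^ (n + 1) ∂sphMeasure n) ≤
      (∫ x : sphere (0 : Euc n) 1, volDens n H x ∂sphMeasure n) ^ 2 := by
  have hF_cont : Continuous fun x : sphere (0 : Euc n) 1 ↦ F x :=
    continuous_iff_continuousAt.2 fun x ↦ (hF x x.2).continuousAt.comp continuousAt_subtype_val
  have hcont : ∀ t, Continuous fun x : sphere (0 : Euc n) 1 ↦ dilationFactor H F v η t x :=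
    fun t ↦ (h.continuous_dilationFactor hF_cont hv η).comp (Continuous.prodMk_right t)
  have hneg := continuous_neg.tendsto' (0 : ℝ) 0 neg_zero
  have hpos := h.eventually_dilationFactor_pos hF_cont hv η
  have hle := h.eventually_dilationFactor_mul_inner_le hF hv hη
  filter_upwards [hpos, hneg.eventually hpos, hle, hneg.eventually hle,
    eventually_forall_abs_mul_lt_one hF_cont] with t ht_pos ht_neg_pos ht_le ht_neg_le ht_abs
  exact h.integral_pow_mul_integral_pow_le (g := fun z ↦ t * F z) (hcont t) (hcont (-t))
    ht_pos ht_neg_pos ht_abs ht_le fun x hx z hz ↦ by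
      simpa only [neg_mul, ← sub_eq_add_neg] using ht_neg_le x hx z hz

lemma poincare_of_integral_eq_zero (h : IsC2PlusSupport n H)
    (hF : ∀ x ∈ sphere (0 : Euc n) 1, HasStrictFDerivAt F (innerSL ℝ (hessianMap H x (v x))) x)
    (hv : Continuous fun x : sphere (0 : Euc n) 1 ↦ v x)
    (hF_zero : ∫ x : sphere (0 : Euc n) 1, volDens n H x * F x ∂sphMeasure n = 0) :
    n * ∫ x : sphere (0 : Euc n) 1, volDens n H x * F x ^ 2 ∂sphMeasure n ≤
      ∫ x : sphere (0 : Euc n) 1,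
        volDens n H x * (H x * ⟪hessianMap H x (v x), v x⟫) ∂sphMeasure n := by
  have hF_cont : Continuous fun x : sphere (0 : Euc n) 1 ↦ F x :=
    continuous_iff_continuousAt.2 fun x ↦ (hF x x.2).continuousAt.comp continuousAt_subtype_val
  have hD := h.continuous_volDens_sphere
  have hq := h.continuous_mul_inner_hessianMap_self hv
  set V := ∫ x : sphere (0 : Euc n) 1, volDens n H x ∂sphMeasure n
  have hV_pos : 0 < V := h.integral_volDens_pos
  refine le_of_forall_pos_le_add fun ε hε ↦ ?_
  have hvariation := integral_mul_sq_le_of_eventually_integral_pow_le (μ := sphMeasure n)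
    (b := fun x ↦ (H x * ⟪hessianMap H x (v x), v x⟫ + ε / V) / 2) hD hF_cont
    ((hq.add continuous_const).div_const 2) (fun x ↦ (h.volDens_pos x.2).le) (n := n) hF_zero
    ((h.eventually_integral_dilationFactor_pow_mul_le hF hv (div_pos hε hV_pos)).mono
      fun t ht ↦ by simpa only [dilationFactor, mul_div, div_mul_eq_mul_div] using ht)
  refine hvariation.trans_eq ?_
  rw [← integral_const_mul]
  calc ∫ x : sphere (0 : Euc n) 1, 2 * (volDens n H x *
          ((H x * ⟪hessianMap H x (v x), v x⟫ + ε / V) / 2)) ∂sphMeasure n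
      = ∫ x : sphere (0 : Euc n) 1, (volDens n H x * (H x * ⟪hessianMap H x (v x), v x⟫) +
          ε / V * volDens n H x) ∂sphMeasure n := by congr with x; ring
    _ = (∫ x : sphere (0 : Euc n) 1,
          volDens n H x * (H x * ⟪hessianMap H x (v x), v x⟫) ∂sphMeasure n) + ε := by
        rw [integral_add (f := fun x : sphere (0 : Euc n) 1 ↦
            volDens n H x * (H x * ⟪hessianMap H x (v x), v x⟫))
          (integrable_sphMeasure_of_continuous (hD.mul hq))
          ((integrable_sphMeasure_of_continuous hD).const_mul _), integral_const_mul,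
          div_mul_cancel₀ ε hV_pos.ne']

theorem poincare (h : IsC2PlusSupport n H)
    (hF : ∀ x ∈ sphere (0 : Euc n) 1, HasStrictFDerivAt F (innerSL ℝ (hessianMap H x (v x))) x)
    (hv : Continuous fun x : sphere (0 : Euc n) 1 ↦ v x) :
    n * ∫ x : sphere (0 : Euc n) 1, volDens n H x * F x ^ 2 ∂sphMeasure n -
        ∫ x : sphere (0 : Euc n) 1,
          volDens n H x * (H x * ⟪hessianMap H x (v x), v x⟫) ∂sphMeasure n ≤
      n * (∫ x : sphere (0 : Euc n) 1, volDens n H x * F x ∂sphMeasure n) ^ 2 /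
        ∫ x : sphere (0 : Euc n) 1, volDens n H x ∂sphMeasure n := by
  have hF_cont : Continuous fun x : sphere (0 : Euc n) 1 ↦ F x :=
    continuous_iff_continuousAt.2 fun x ↦ (hF x x.2).continuousAt.comp continuousAt_subtype_val
  have hD := h.continuous_volDens_sphere
  have hD_int := integrable_sphMeasure_of_continuous hD
  have hDF_int : Integrable (fun x : sphere (0 : Euc n) 1 ↦ volDens n H x * F x) (sphMeasure n) :=
    integrable_sphMeasure_of_continuous (hD.mul hF_cont)
  have hDF_sq_int : Integrable (fun x : sphere (0 : Euc n) 1 ↦ volDens n H x * F x ^ 2)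
      (sphMeasure n) := integrable_sphMeasure_of_continuous (hD.mul (hF_cont.pow 2))
  have hV := h.integral_volDens_pos.ne'
  have hcentered := h.poincare_of_integral_eq_zero (fun x hx ↦ (hF x hx).sub_const _) hv
    (integral_mul_sub_mean hD_int hDF_int hV)
  rw [integral_mul_sub_mean_sq hD_int hDF_int hDF_sq_int hV] at hcentered
  rw [mul_div_assoc]
  linarith

end IsC2PlusSupport

end Poincare

section SphereDivergence

open Module
open scoped Topology

variable {E : Type*} [NormedAddCommGroup E]

lemma radial_cutoff_mul_eventuallyEq_zero {c : ℝ → ℝ} (hc : tsupport c ⊆ Set.Ioi 0) (p : E → ℝ) :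
    (fun y ↦ c ‖y‖ * p y) =ᶠ[𝓝 0] fun _ ↦ 0 := by
  have hc_zero : c =ᶠ[𝓝 0] 0 :=
    notMem_tsupport_iff_eventuallyEq.1 fun h0 ↦ Set.self_notMem_Ioi (hc h0)
  exact (tendsto_norm_zero.eventually hc_zero).mono fun y hy ↦ by simp [hy]

lemma continuous_radial_cutoff_mul {c : ℝ → ℝ} (hc : Continuous c)
    (hc_supp : tsupport c ⊆ Set.Ioi 0) {p : E → ℝ} (hp : ∀ y ≠ 0, ContinuousAt p y) :
    Continuous fun y ↦ c ‖y‖ * p y := by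
  refine continuous_iff_continuousAt.2 fun y ↦ ?_
  rcases eq_or_ne y 0 with rfl | hy
  · exact continuousAt_const.congr (radial_cutoff_mul_eventuallyEq_zero hc_supp p).symm
  · exact (hc.continuousAt.comp continuous_norm.continuousAt).mul (hp y hy)

lemma hasCompactSupport_radial_cutoff_mul [ProperSpace E] {c : ℝ → ℝ} (hc : HasCompactSupport c)
    (p : E → ℝ) : HasCompactSupport fun y ↦ c ‖y‖ * p y := by
  rw [hasCompactSupport_iff_eventuallyEq, Filter.coclosedCompact_eq_cocompact] at hc ⊢
  exact ((tendsto_norm_cocompact_atTop.mono_right atTop_le_cocompact).eventually hc).mono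
    fun y hy ↦ by simp [hy]

lemma integrable_radial_cutoff_mul [ProperSpace E] [MeasurableSpace E] [BorelSpace E]
    {μ : Measure E} [IsFiniteMeasureOnCompacts μ] {c : ℝ → ℝ} (hc : Continuous c)
    (hc_compact : HasCompactSupport c) (hc_supp : tsupport c ⊆ Set.Ioi 0) {p : E → ℝ}
    (hp : ∀ y ≠ 0, ContinuousAt p y) : Integrable (fun y ↦ c ‖y‖ * p y) μ :=
  (continuous_radial_cutoff_mul hc hc_supp hp).integrable_of_hasCompactSupport
    (hasCompactSupport_radial_cutoff_mul hc_compact p)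

lemma exists_radial_cutoff : ∃ c : ℝ → ℝ, ContDiff ℝ 1 c ∧ HasCompactSupport c ∧
    tsupport c ⊆ Set.Ioi 0 ∧ 0 < ∫ r in Set.Ioi (0 : ℝ), r⁻¹ * c r := by
  let b : ContDiffBump (2 : ℝ) := ⟨1 / 2, 1, by norm_num, by norm_num⟩
  have hb_supp : tsupport b ⊆ Set.Ioi 0 := by
    rw [b.tsupport_eq, Real.closedBall_eq_Icc]
    exact fun r hr ↦ lt_of_lt_of_le (by norm_num [b]) hr.1
  refine ⟨fun r ↦ r * b r, contDiff_id.mul b.contDiff, b.hasCompactSupport.mul_left,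
    tsupport_mul_subset_right.trans hb_supp, ?_⟩
  calc (0 : ℝ) < ∫ r, b r := b.integral_pos
    _ = ∫ r in Set.Ioi (0 : ℝ), b r :=
        (setIntegral_eq_integral_of_forall_compl_eq_zero fun r hr ↦
          image_eq_zero_of_notMem_tsupport fun h ↦ hr (hb_supp h)).symm
    _ = ∫ r in Set.Ioi (0 : ℝ), r⁻¹ * (r * b r) :=
        setIntegral_congr_fun measurableSet_Ioi fun r hr ↦
          (inv_mul_cancel_left₀ (ne_of_gt hr) (b r)).symm

lemma integral_radial_mul_of_homogeneous [NormedSpace ℝ E] [FiniteDimensional ℝ E]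
    [MeasurableSpace E] [BorelSpace E] [Nontrivial E] (μ : Measure E) [μ.IsAddHaarMeasure]
    (a : ℝ → ℝ) {p : E → ℝ} {k : ℕ}
    (hp : ∀ c > 0, ∀ y ≠ 0, p (c • y) = (c ^ k)⁻¹ * p y) :
    ∫ y, a ‖y‖ * p y ∂μ = (∫ x : sphere (0 : E) 1, p x ∂μ.toSphere) *
      ∫ r in Set.Ioi (0 : ℝ), r ^ (finrank ℝ E - 1) * (a r * (r ^ k)⁻¹) := by
  rw [← integral_mul_radial μ (fun r ↦ a r * (r ^ k)⁻¹) p]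
  refine integral_congr_ae ?_
  filter_upwards [compl_mem_ae_iff.2 (measure_singleton (0 : E))] with y hy
  have hy_norm := norm_pos_iff.2 hy
  rw [hp _ (inv_pos.2 hy_norm) y hy, inv_pow, inv_inv]
  field_simp

lemma integral_fderiv_apply_eq_zero [NormedSpace ℝ E] [FiniteDimensional ℝ E] [MeasurableSpace E]
    [BorelSpace E] {μ : Measure E} [μ.IsAddHaarMeasure] {f : E → ℝ} (hf : Differentiable ℝ f)
    (hf_int : Integrable f μ) {v : E} (hf'_int : Integrable (fun y ↦ fderiv ℝ f y v) μ) :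
    ∫ y, fderiv ℝ f y v ∂μ = 0 := by
  simpa using integral_mul_fderiv_eq_neg_fderiv_mul_of_integrable (μ := μ) (f := fun _ ↦ (1 : ℝ))
    (g := f) (v := v) (by simp) (by simpa using hf'_int) (by simpa using hf_int)
    (fun _ _ ↦ differentiableAt_const _) fun x _ ↦ hf x

variable [InnerProductSpace ℝ E]

lemma hasFDerivAt_radial_cutoff_mul {c : ℝ → ℝ} (hc : Differentiable ℝ c)
    (hc_supp : tsupport c ⊆ Set.Ioi 0) {g : E → ℝ} (hg : ∀ y ≠ 0, DifferentiableAt ℝ g y) (y : E) :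
    HasFDerivAt (fun z ↦ c ‖z‖ * g z)
      (c ‖y‖ • fderiv ℝ g y + deriv c ‖y‖ • (g y • fderiv ℝ norm y)) y := by
  rcases eq_or_ne y 0 with rfl | hy
  · have h0 : (0 : ℝ) ∉ tsupport c := fun h0 ↦ Set.self_notMem_Ioi (hc_supp h0)
    have hderiv_zero := image_eq_zero_of_notMem_tsupport fun h ↦ h0 (tsupport_deriv_subset h)
    simpa [image_eq_zero_of_notMem_tsupport h0, hderiv_zero] using
      (hasFDerivAt_const (0 : ℝ) (0 : E)).congr_of_eventuallyEq
        (radial_cutoff_mul_eventuallyEq_zero hc_supp g)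
  · have hnorm := ((contDiffAt_norm ℝ hy (n := 1)).differentiableAt one_ne_zero).hasFDerivAt
    refine (((hc ‖y‖).hasDerivAt.comp_hasFDerivAt y hnorm).mul
      (hg y hy).hasFDerivAt).congr_fderiv ?_
    rw [smul_comm (deriv c ‖y‖)]
    rfl

variable [FiniteDimensional ℝ E] [MeasurableSpace E] [BorelSpace E] {μ : Measure E}
  [μ.IsAddHaarMeasure]

lemma integral_radial_cutoff_mul_fderiv_add {c : ℝ → ℝ} (hc : ContDiff ℝ 1 c)
    (hc_compact : HasCompactSupport c) (hc_supp : tsupport c ⊆ Set.Ioi 0) {g : E → ℝ}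
    (hg : ∀ y ≠ 0, ContDiffAt ℝ 1 g y) (v : E) :
    ∫ y, c ‖y‖ * fderiv ℝ g y v ∂μ + ∫ y, deriv c ‖y‖ * (g y * fderiv ℝ norm y v) ∂μ = 0 := by
  have hderiv := hasFDerivAt_radial_cutoff_mul (hc.differentiable one_ne_zero) hc_supp
    fun y hy ↦ (hg y hy).differentiableAt one_ne_zero
  have hfderiv_apply : ∀ y, fderiv ℝ (fun z ↦ c ‖z‖ * g z) y v =
      c ‖y‖ * fderiv ℝ g y v + deriv c ‖y‖ * (g y * fderiv ℝ norm y v) := fun y ↦ by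
    rw [(hderiv y).fderiv]
    rfl
  have hint_left : Integrable (fun y ↦ c ‖y‖ * fderiv ℝ g y v) μ :=
    integrable_radial_cutoff_mul hc.continuous hc_compact hc_supp fun y hy ↦
      ((hg y hy).continuousAt_fderiv one_ne_zero).clm_apply continuousAt_const
  have hint_right : Integrable (fun y ↦ deriv c ‖y‖ * (g y * fderiv ℝ norm y v)) μ :=
    integrable_radial_cutoff_mul (hc.continuous_deriv le_rfl) hc_compact.deriv
      (tsupport_deriv_subset.trans hc_supp) fun y hy ↦ (hg y hy).continuousAt.mul
        (((contDiffAt_norm ℝ hy).continuousAt_fderiv one_ne_zero).clm_apply continuousAt_const)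
  have hzero : ∫ y, fderiv ℝ (fun z ↦ c ‖z‖ * g z) y v ∂μ = 0 := by
    refine integral_fderiv_apply_eq_zero (fun y ↦ (hderiv y).differentiableAt)
      (integrable_radial_cutoff_mul hc.continuous hc_compact hc_supp fun y hy ↦
        (hg y hy).continuousAt) ?_
    simp only [hfderiv_apply]
    exact hint_left.add hint_right
  simp only [hfderiv_apply] at hzero
  rwa [integral_add hint_left hint_right] at hzero

/-- Integrating `∂ᵥ(c(‖y‖) g(y)) = 0` in polar coordinates, the term with `c'` contributes a factor
`∫ c'(r) dr = 0`: the degree of `g` is the one for which no power of `r` is left there. -/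
theorem integral_sphere_fderiv_eq_zero_of_homogeneous [Nontrivial E] {g : E → ℝ}
    (hg : ∀ y ≠ 0, ContDiffAt ℝ 1 g y)
    (hg_smul : ∀ c > 0, ∀ y ≠ 0, g (c • y) = (c ^ (finrank ℝ E - 1))⁻¹ * g y) (v : E) :
    ∫ x : sphere (0 : E) 1, fderiv ℝ g x v ∂μ.toSphere = 0 := by
  obtain ⟨c, hc, hc_compact, hc_supp, hc_pos⟩ := exists_radial_cutoff
  have hfderiv_smul : ∀ s > 0, ∀ y ≠ 0,
      fderiv ℝ g (s • y) v = (s ^ (finrank ℝ E - 1 + 1))⁻¹ * fderiv ℝ g y v := fun s hs y hy ↦ by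
    rw [fderiv_smul_of_eventually_smul hs.ne' ((isOpen_ne.eventually_mem hy).mono (hg_smul s hs)),
      pow_succ', mul_inv]
    rfl
  have hnorm_smul : ∀ s > 0, ∀ y ≠ 0, g (s • y) * fderiv ℝ norm (s • y) v =
      (s ^ (finrank ℝ E - 1))⁻¹ * (g y * fderiv ℝ norm y v) := fun s hs y hy ↦ by
    rw [hg_smul s hs y hy, fderiv_norm_smul_pos hs, mul_assoc]
  have hpolar := integral_radial_cutoff_mul_fderiv_add (μ := μ) hc hc_compact hc_supp hg v
  have hradial : ∀ r ∈ Set.Ioi (0 : ℝ), r ^ (finrank ℝ E - 1) *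
      (c r * (r ^ (finrank ℝ E - 1 + 1))⁻¹) = r⁻¹ * c r := fun r hr ↦ by
    have : r ≠ 0 := ne_of_gt hr
    field_simp
    ring
  have hradial_deriv : ∀ r ∈ Set.Ioi (0 : ℝ), r ^ (finrank ℝ E - 1) *
      (deriv c r * (r ^ (finrank ℝ E - 1))⁻¹) = deriv c r := fun r hr ↦ by
    have : r ≠ 0 := ne_of_gt hr
    field_simp
  rw [integral_radial_mul_of_homogeneous μ c hfderiv_smul,
    integral_radial_mul_of_homogeneous μ (deriv c) hnorm_smul,
    setIntegral_congr_fun measurableSet_Ioi hradial,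
    setIntegral_congr_fun measurableSet_Ioi hradial_deriv,
    hc_compact.integral_Ioi_deriv_eq hc,
    image_eq_zero_of_notMem_tsupport fun h0 ↦ Set.self_notMem_Ioi (hc_supp h0), neg_zero, mul_zero,
    add_zero] at hpolar
  exact (mul_eq_zero.1 hpolar).resolve_right hc_pos.ne'

theorem integral_sphere_trace_fderiv_eq_zero_of_homogeneous [Nontrivial E] {V : E → E}
    (hV : ∀ y ≠ 0, ContDiffAt ℝ 1 V y)
    (hV_smul : ∀ c : ℝ, 0 < c → ∀ y ≠ 0, V (c • y) = (c ^ (finrank ℝ E - 1))⁻¹ • V y) :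
    ∫ x : sphere (0 : E) 1, LinearMap.trace ℝ E (fderiv ℝ V x) ∂μ.toSphere = 0 := by
  let b := stdOrthonormalBasis ℝ E
  have hcomponent : ∀ i, ∀ y ≠ 0, ContDiffAt ℝ 1 (fun z ↦ ⟪b i, V z⟫) y :=
    fun i y hy ↦ contDiffAt_const.inner ℝ (hV y hy)
  have htrace : ∀ x : sphere (0 : E) 1, LinearMap.trace ℝ E (fderiv ℝ V x) =
      ∑ i, fderiv ℝ (fun z ↦ ⟪b i, V z⟫) x (b i) := fun x ↦ by
    have hVx := (hV x (ne_zero_of_mem_sphere_zero_one x.2)).differentiableAt one_ne_zero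
    simp [LinearMap.trace_eq_sum_inner _ b, fderiv_inner_apply ℝ (differentiableAt_const _) hVx]
  simp only [htrace]
  rw [integral_finsetSum]
  · refine Finset.sum_eq_zero fun i _ ↦
      integral_sphere_fderiv_eq_zero_of_homogeneous (hcomponent i) (fun c hc y hy ↦ ?_) (b i)
    rw [hV_smul c hc y hy, real_inner_smul_right]
  · refine fun i _ ↦ Continuous.integrable_of_hasCompactSupport ?_ (.of_compactSpace _)
    exact continuous_iff_continuousAt.2 fun x ↦ ContinuousAt.comp (g := fun y ↦ _)
      (((hcomponent i x (ne_zero_of_mem_sphere_zero_one x.2)).continuousAt_fderiv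
        one_ne_zero).clm_apply continuousAt_const) continuousAt_subtype_val

end SphereDivergence

section ConeVolumeField

lemma contDiffAt_inv_norm_smul {E : Type*} [NormedAddCommGroup E] [InnerProductSpace ℝ E]
    {k : WithTop ℕ∞} {y : E} (hy : y ≠ 0) : ContDiffAt ℝ k (fun z : E ↦ ‖z‖⁻¹ • z) y :=
  ((contDiffAt_norm ℝ hy).inv (norm_ne_zero_iff.2 hy)).smul contDiffAt_id

lemma hasDerivAt_inv_pow (n : ℕ) {t : ℝ} (ht : t ≠ 0) :
    HasDerivAt (fun s : ℝ ↦ (s ^ n)⁻¹) (-(n / t ^ (n + 1))) t := by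
  have hzpow := hasDerivAt_zpow (-n : ℤ) t (.inl ht)
  rw [← neg_add', _root_.zpow_neg, ← Nat.cast_succ, zpow_natCast, Int.cast_neg, Int.cast_natCast,
    neg_mul, ← div_eq_mul_inv] at hzpow
  simpa only [_root_.zpow_neg, zpow_natCast] using hzpow

variable {n : ℕ} {H u : Euc n → ℝ} {x y : Euc n}

/-- The `0`-homogeneous extension of `h^{n+2}/𝒦`; the spherical gradient of `logQ` is the
Euclidean gradient of its logarithm. -/
def curvatureQuotient (n : ℕ) (H : Euc n → ℝ) (y : Euc n) : ℝ :=
  H (‖y‖⁻¹ • y) ^ (n + 2) / gaussCurv n H (‖y‖⁻¹ • y)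

/-- The `(-n)`-homogeneous extension of the vector field `u h X dV/dμ` on `S^n`. -/
def coneVolumeField (n : ℕ) (H u : Euc n → ℝ) (y : Euc n) : Euc n :=
  (u y * curvatureQuotient n H y * (H y ^ n)⁻¹) • gradient H y

lemma curvatureQuotient_smul {c : ℝ} (hc : 0 < c) (y : Euc n) :
    curvatureQuotient n H (c • y) = curvatureQuotient n H y := by
  have hnormalize : ‖c • y‖⁻¹ • c • y = ‖y‖⁻¹ • y := NormedSpace.normalize_smul_of_pos hc y
  rw [curvatureQuotient, curvatureQuotient, hnormalize]

lemma curvatureQuotient_eq (y : Euc n) : curvatureQuotient n H y =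
    H (‖y‖⁻¹ • y) ^ (n + 1) * volDens n H (‖y‖⁻¹ • y) := by
  rw [curvatureQuotient, gaussCurv, volDens, div_inv_eq_mul, pow_succ, mul_assoc]

lemma curvatureQuotient_of_mem_sphere (hx : x ∈ sphere (0 : Euc n) 1) :
    curvatureQuotient n H x = H x ^ (n + 1) * volDens n H x := by
  rw [curvatureQuotient_eq, mem_sphere_zero_iff_norm.1 hx, inv_one, one_smul]

namespace IsC2PlusSupport

lemma curvatureQuotient_pos (h : IsC2PlusSupport n H) (hy : y ≠ 0) :
    0 < curvatureQuotient n H y := by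
  rw [curvatureQuotient_eq]
  have hy' := inv_norm_smul_mem_sphere hy
  exact mul_pos (pow_pos (h.pos_of_mem_sphere _ hy') _) (h.volDens_pos hy')

lemma contDiffAt_curvatureQuotient (h : IsC2PlusSupport n H) (hH : ContDiffOn ℝ 3 H {0}ᶜ)
    (hy : y ≠ 0) : ContDiffAt ℝ 1 (curvatureQuotient n H) y := by
  have hy' := ne_zero_of_mem_sphere_zero_one (inv_norm_smul_mem_sphere hy)
  have hHy : ContDiffAt ℝ 3 H (‖y‖⁻¹ • y) := hH.contDiffAt (isOpen_compl_singleton.mem_nhds hy')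
  have hquotient : ContDiffAt ℝ 1 (fun z ↦ H z ^ (n + 1) * volDens n H z) (‖y‖⁻¹ • y) :=
    ((hHy.of_le (by norm_num)).pow _).mul
      (contDiffAt_volDens hHy (by norm_num) (h.pos hy').ne')
  rw [funext curvatureQuotient_eq]
  exact hquotient.comp (f := fun z ↦ ‖z‖⁻¹ • z) y (contDiffAt_inv_norm_smul hy)

lemma inner_sphGrad_logQ (h : IsC2PlusSupport n H) (hH : ContDiffOn ℝ 3 H {0}ᶜ) (hx : x ≠ 0)
    (w : Euc n) : ⟪sphGrad n (logQ n H) x, w⟫ =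
      (curvatureQuotient n H x)⁻¹ * fderiv ℝ (curvatureQuotient n H) x w := by
  have hlog := ((h.contDiffAt_curvatureQuotient hH hx).differentiableAt
    one_ne_zero).hasFDerivAt.log (h.curvatureQuotient_pos hx).ne'
  rw [sphGrad, inner_gradient_left]
  exact DFunLike.congr_fun hlog.fderiv w

lemma contDiffAt_coneVolumeField (h : IsC2PlusSupport n H) (hH : ContDiffOn ℝ 3 H {0}ᶜ)
    (hu : ContDiffAt ℝ 1 u y) (hy : y ≠ 0) : ContDiffAt ℝ 1 (coneVolumeField n H u) y :=
  ((hu.mul (h.contDiffAt_curvatureQuotient hH hy)).mul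
    ((((h.contDiffAt hy).of_le one_le_two).pow n).inv (pow_ne_zero n (h.pos hy).ne'))).smul
    (h.contDiffAt_gradient hy)

lemma coneVolumeField_smul (h : IsC2PlusSupport n H) {c : ℝ} (hc : 0 < c)
    (hu : u (c • y) = u y) :
    coneVolumeField n H u (c • y) = (c ^ n)⁻¹ • coneVolumeField n H u y := by
  rw [coneVolumeField, coneVolumeField, hu, curvatureQuotient_smul hc, h.homog c hc,
    h.gradient_smul hc, smul_smul, mul_pow]
  congr 1
  field_simp

lemma integral_trace_fderiv_coneVolumeField (h : IsC2PlusSupport n H)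
    (hH : ContDiffOn ℝ 3 H {0}ᶜ) (hu : ∀ y ≠ 0, ContDiffAt ℝ 1 u y)
    (hu_smul : ∀ c : ℝ, 0 < c → ∀ y, u (c • y) = u y) :
    ∫ x : sphere (0 : Euc n) 1,
      LinearMap.trace ℝ (Euc n) (fderiv ℝ (coneVolumeField n H u) x) ∂sphMeasure n = 0 :=
  integral_sphere_trace_fderiv_eq_zero_of_homogeneous
    (fun y hy ↦ h.contDiffAt_coneVolumeField hH (hu y hy) hy)
    fun c hc y _ ↦ by simpa using h.coneVolumeField_smul hc (hu_smul c hc y)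

lemma continuous_trace_fderiv_coneVolumeField (h : IsC2PlusSupport n H)
    (hH : ContDiffOn ℝ 3 H {0}ᶜ) (hu : ∀ y ≠ 0, ContDiffAt ℝ 1 u y) :
    Continuous fun x : sphere (0 : Euc n) 1 ↦
      LinearMap.trace ℝ (Euc n) (fderiv ℝ (coneVolumeField n H u) x) := by
  have hfderiv : Continuous fun x : sphere (0 : Euc n) 1 ↦ fderiv ℝ (coneVolumeField n H u) x :=
    continuous_restrict_sphere fun y hy ↦
      (h.contDiffAt_coneVolumeField hH (hu y hy) hy).continuousAt_fderiv one_ne_zero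
  exact (LinearMap.continuous_of_finiteDimensional
    (LinearMap.trace ℝ (Euc n) ∘ₗ ContinuousLinearMap.coeLM ℝ)).comp hfderiv

lemma fderiv_mul_curvatureQuotient_mul_inv_pow (h : IsC2PlusSupport n H)
    (hH : ContDiffOn ℝ 3 H {0}ᶜ) (hu : DifferentiableAt ℝ u x) (hx : x ∈ sphere (0 : Euc n) 1)
    (w : Euc n) :
    fderiv ℝ (fun y ↦ u y * curvatureQuotient n H y * (H y ^ n)⁻¹) x w =
      volDens n H x * (H x * fderiv ℝ u x w + u x * (H x * ⟪sphGrad n (logQ n H) x, w⟫)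
        - n * (u x * ⟪gradient H x, w⟫)) := by
  have hx0 := ne_zero_of_mem_sphere_zero_one hx
  have hH_pos := h.pos hx0
  have hD_pos := h.volDens_pos hx
  have hpow : HasFDerivAt (fun y ↦ (H y ^ n)⁻¹)
      (-(n / H x ^ (n + 1)) • innerSL ℝ (gradient H x)) x :=
    (hasDerivAt_inv_pow n hH_pos.ne').comp_hasFDerivAt x (h.hasFDerivAt hx0)
  have hderiv := (hu.hasFDerivAt.mul ((h.contDiffAt_curvatureQuotient hH hx0).differentiableAt
    one_ne_zero).hasFDerivAt).mul hpow
  rw [show fderiv ℝ (fun y ↦ u y * curvatureQuotient n H y * (H y ^ n)⁻¹) x = _ from hderiv.fderiv,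
    h.inner_sphGrad_logQ hH hx0]
  simp only [_root_.add_apply, _root_.smul_apply, smul_eq_mul, innerSL_apply_apply, Pi.mul_apply,
    curvatureQuotient_of_mem_sphere hx]
  field_simp
  ring

lemma trace_fderiv_coneVolumeField (h : IsC2PlusSupport n H) (hH : ContDiffOn ℝ 3 H {0}ᶜ)
    (hu : DifferentiableAt ℝ u x) (hx : x ∈ sphere (0 : Euc n) 1) :
    LinearMap.trace ℝ (Euc n) (fderiv ℝ (coneVolumeField n H u) x) =
      volDens n H x * (H x * fderiv ℝ u x (gradient H x)
        + u x * (H x * ⟪sphGrad n (logQ n H) x, gradient H x⟫)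
        - n * (u x * ‖gradient H x‖ ^ 2)
        + u x * (H x * LinearMap.trace ℝ (Euc n) (hessianMap H x))) := by
  have hx0 := ne_zero_of_mem_sphere_zero_one hx
  have hweight : DifferentiableAt ℝ (fun y ↦ u y * curvatureQuotient n H y * (H y ^ n)⁻¹) x :=
    (hu.mul ((h.contDiffAt_curvatureQuotient hH hx0).differentiableAt one_ne_zero)).mul
      (((h.hasFDerivAt hx0).differentiableAt.pow n).inv (pow_ne_zero n (h.pos hx0).ne'))
  have hfderiv : fderiv ℝ (coneVolumeField n H u) x = _ :=
    fderiv_fun_smul hweight ((h.contDiffAt_gradient hx0).differentiableAt one_ne_zero)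
  have htrace : LinearMap.trace ℝ (Euc n) (fderiv ℝ (coneVolumeField n H u) x) =
      u x * curvatureQuotient n H x * (H x ^ n)⁻¹ * LinearMap.trace ℝ (Euc n) (hessianMap H x) +
        fderiv ℝ (fun y ↦ u y * curvatureQuotient n H y * (H y ^ n)⁻¹) x (gradient H x) := by
    rw [hfderiv]
    simp [hessianMap]
  rw [htrace, h.fderiv_mul_curvatureQuotient_mul_inv_pow hH hu hx,
    curvatureQuotient_of_mem_sphere hx, real_inner_self_eq_norm_sq]
  have hH_pos := h.pos hx0
  field_simp
  ring

end IsC2PlusSupport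

end ConeVolumeField

section Radial

variable {E : Type*} [NormedAddCommGroup E] [InnerProductSpace ℝ E]

lemma hasStrictFDerivAt_norm {p : E} (hp : p ≠ 0) :
    HasStrictFDerivAt (‖·‖) (innerSL ℝ (‖p‖⁻¹ • p)) p := by
  have hsqrt := (hasStrictFDerivAt_norm_sq p).sqrt (pow_ne_zero 2 (norm_ne_zero_iff.2 hp))
  simp only [Real.sqrt_sq (norm_nonneg _)] at hsqrt
  refine hsqrt.congr_fderiv ?_
  rw [map_smul, ← Nat.cast_smul_eq_nsmul ℝ, smul_smul, Nat.cast_two, one_div, mul_inv,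
    mul_right_comm, inv_mul_cancel₀ two_ne_zero, one_mul]

lemma hasStrictFDerivAt_comp_norm {ψ : ℝ → ℝ} {ψ' : ℝ} {p : E} (hp : p ≠ 0)
    (hψ : HasStrictDerivAt ψ ψ' ‖p‖) :
    HasStrictFDerivAt (fun q : E ↦ ψ ‖q‖) (innerSL ℝ ((ψ' / ‖p‖) • p)) p := by
  refine (hψ.comp_hasStrictFDerivAt p (hasStrictFDerivAt_norm hp)).congr_fderiv ?_
  rw [map_smul, map_smul, smul_smul, div_eq_mul_inv]

lemma hasStrictFDerivAt_comp_norm_mul_inner {ψ : ℝ → ℝ} {ψ' : ℝ} {p : E} (hp : p ≠ 0)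
    (hψ : HasStrictDerivAt ψ ψ' ‖p‖) (e : E) :
    HasStrictFDerivAt (fun q : E ↦ ψ ‖q‖ * ⟪e, q⟫)
      (innerSL ℝ ((ψ' / ‖p‖ * ⟪e, p⟫) • p + ψ ‖p‖ • e)) p := by
  refine ((hasStrictFDerivAt_comp_norm hp hψ).mul (innerSL ℝ e).hasStrictFDerivAt).congr_fderiv
    (ContinuousLinearMap.ext fun w ↦ ?_)
  simp only [_root_.add_apply, _root_.smul_apply, smul_eq_mul, innerSL_apply_apply, inner_add_left,
    real_inner_smul_left]
  ring

lemma contDiffAt_comp_norm {k : WithTop ℕ∞} {ψ : ℝ → ℝ} {p : E}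
    (hψ : ContDiffOn ℝ k ψ (Set.Ioi 0)) (hp : p ≠ 0) : ContDiffAt ℝ k (fun q : E ↦ ψ ‖q‖) p :=
  (hψ.contDiffAt (Ioi_mem_nhds (norm_pos_iff.2 hp))).comp p (contDiffAt_norm ℝ hp)

lemma sum_inner_map_inner_smul_add_smul {ι : Type*} [Fintype ι] (b : OrthonormalBasis ι ℝ E)
    (A : E →ₗ[ℝ] E) (w : E) (s t : ℝ) :
    ∑ i, ⟪A ((s * ⟪b i, w⟫) • w + t • b i), (s * ⟪b i, w⟫) • w + t • b i⟫ =
      (s ^ 2 * ‖w‖ ^ 2 + 2 * s * t) * ⟪A w, w⟫ + t ^ 2 * LinearMap.trace ℝ E A := by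
  have hnorm : ∑ i, ⟪b i, w⟫ ^ 2 = ‖w‖ ^ 2 := b.sum_sq_inner_right w
  have hright : ∑ i, ⟪b i, w⟫ * ⟪A w, b i⟫ = ⟪A w, w⟫ := by
    simpa only [mul_comm] using b.sum_inner_mul_inner (A w) w
  have hleft : ∑ i, ⟪b i, w⟫ * ⟪A (b i), w⟫ = ⟪A w, w⟫ := by
    conv_rhs => rw [← b.sum_repr' w, map_sum, sum_inner]
    simp only [map_smul, real_inner_smul_left, b.sum_repr' w]
  have hexpand (i : ι) :
      ⟪A ((s * ⟪b i, w⟫) • w + t • b i), (s * ⟪b i, w⟫) • w + t • b i⟫ =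
        s ^ 2 * ⟪A w, w⟫ * ⟪b i, w⟫ ^ 2 + s * t * (⟪b i, w⟫ * ⟪A w, b i⟫)
          + s * t * (⟪b i, w⟫ * ⟪A (b i), w⟫) + t ^ 2 * ⟪b i, A (b i)⟫ := by
    simp only [map_add, map_smul, inner_add_left, inner_add_right, real_inner_smul_left,
      real_inner_smul_right, real_inner_comm (b i) (A (b i))]
    ring
  simp_rw [hexpand, Finset.sum_add_distrib, ← Finset.mul_sum]
  rw [hnorm, hright, hleft, LinearMap.trace_eq_sum_inner A b]
  ring

lemma sum_radial_mul_inner_sq {ι : Type*} [Fintype ι] (ψ : ℝ → ℝ)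
    (b : OrthonormalBasis ι ℝ E) (p : E) :
    ∑ i, (ψ ‖p‖ * ⟪b i, p⟫) ^ 2 = ψ ‖p‖ ^ 2 * ‖p‖ ^ 2 := by
  simp_rw [mul_pow, ← Finset.mul_sum, b.sum_sq_inner_right]

end Radial

section RadialWeight

/-- With `X = ∇H` and `r = ‖X‖`, the sum over an orthonormal basis `e` of the quadratic forms
`⟪D²H v, v⟫` at the vectors `v` with `d(φ(r) ⟪e, X⟫) = ⟪D²H v, ·⟫`. -/
def radialEnergy (n : ℕ) (H : Euc n → ℝ) (φ : ℝ → ℝ) (x : Euc n) : ℝ :=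
  ((deriv φ ‖gradient H x‖ / ‖gradient H x‖) ^ 2 * ‖gradient H x‖ ^ 2
      + 2 * (deriv φ ‖gradient H x‖ / ‖gradient H x‖) * φ ‖gradient H x‖)
      * ⟪hessianMap H x (gradient H x), gradient H x⟫
    + φ ‖gradient H x‖ ^ 2 * LinearMap.trace ℝ (Euc n) (hessianMap H x)

variable {n : ℕ} {H : Euc n → ℝ} {φ : ℝ → ℝ} {x y : Euc n}

namespace IsC2PlusSupport

lemma gradient_ne_zero (h : IsC2PlusSupport n H) (hy : y ≠ 0) : gradient H y ≠ 0 := by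
  intro hzero
  have hself := h.inner_gradient_self hy
  rw [hzero, inner_zero_left] at hself
  exact (h.pos hy).ne hself

lemma hasStrictFDerivAt_comp_gradient (h : IsC2PlusSupport n H) (hy : y ≠ 0) {G : Euc n → ℝ}
    {g : Euc n} (hG : HasStrictFDerivAt G (innerSL ℝ g) (gradient H y)) :
    HasStrictFDerivAt (fun z ↦ G (gradient H z)) (innerSL ℝ (hessianMap H y g)) y := by
  refine (hG.comp y (h.hasStrictFDerivAt_gradient hy)).congr_fderiv
    (ContinuousLinearMap.ext fun w ↦ ?_)
  rw [ContinuousLinearMap.comp_apply, innerSL_apply_apply, innerSL_apply_apply,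
    inner_hessianMap_comm (h.contDiffAt hy), real_inner_comm]

lemma inner_sphGrad_log_norm_gradient (h : IsC2PlusSupport n H) (hx : x ≠ 0) (w : Euc n) :
    ⟪sphGrad n (fun y ↦ Real.log ‖gradient H y‖) x, w⟫ =
      (‖gradient H x‖ ^ 2)⁻¹ * ⟪hessianMap H x (gradient H x), w⟫ := by
  have hX := h.gradient_ne_zero hx
  have hnormalize : (fun y ↦ Real.log ‖gradient H (‖y‖⁻¹ • y)‖) =ᶠ[nhds x]
      fun y ↦ Real.log ‖gradient H y‖ := by
    filter_upwards [isOpen_ne.mem_nhds hx] with z hz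
    rw [h.gradient_smul (inv_pos.2 (norm_pos_iff.2 hz))]
  have hlog := h.hasStrictFDerivAt_comp_gradient hx
    (hasStrictFDerivAt_comp_norm hX (Real.hasStrictDerivAt_log (norm_ne_zero_iff.2 hX)))
  rw [sphGrad, inner_gradient_left, hnormalize.fderiv_eq, hlog.hasFDerivAt.fderiv,
    innerSL_apply_apply, map_smul, real_inner_smul_left, div_eq_mul_inv, sq,
    mul_inv]

lemma contDiffAt_comp_norm_gradient (h : IsC2PlusSupport n H)
    (hφ : ContDiffOn ℝ 1 φ (Set.Ioi 0)) (hy : y ≠ 0) :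
    ContDiffAt ℝ 1 (fun z ↦ φ ‖gradient H z‖) y :=
  (contDiffAt_comp_norm hφ (h.gradient_ne_zero hy)).comp (f := gradient H) y
    (h.contDiffAt_gradient hy)

lemma continuous_comp_gradient_sphere (h : IsC2PlusSupport n H) {Y : Type*} [TopologicalSpace Y]
    {G : Euc n → Y} (hG : ∀ p ≠ 0, ContinuousAt G p) :
    Continuous fun x : sphere (0 : Euc n) 1 ↦ G (gradient H x) :=
  continuous_restrict_sphere (f := fun y ↦ G (gradient H y)) fun _ hy ↦
    (hG _ (h.gradient_ne_zero hy)).comp (h.contDiffAt_gradient hy).continuousAt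

lemma continuous_gradient_comp_gradient_sphere (h : IsC2PlusSupport n H) {G : Euc n → ℝ}
    (hG : ∀ p ≠ 0, ContDiffAt ℝ 1 G p) :
    Continuous fun x : sphere (0 : Euc n) 1 ↦ gradient G (gradient H x) :=
  h.continuous_comp_gradient_sphere fun p hp ↦
    (_root_.contDiffAt_gradient (k := 0) (hG p hp) (by norm_num)).continuousAt

lemma poincare_comp_gradient (h : IsC2PlusSupport n H) {G : Euc n → ℝ}
    (hG : ∀ p ≠ 0, ContDiffAt ℝ 1 G p) :
    n * ∫ x : sphere (0 : Euc n) 1, volDens n H x * G (gradient H x) ^ 2 ∂sphMeasure n -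
        ∫ x : sphere (0 : Euc n) 1, volDens n H x * (H x *
          ⟪hessianMap H x (gradient G (gradient H x)), gradient G (gradient H x)⟫) ∂sphMeasure n ≤
      n * (∫ x : sphere (0 : Euc n) 1, volDens n H x * G (gradient H x) ∂sphMeasure n) ^ 2 /
        ∫ x : sphere (0 : Euc n) 1, volDens n H x ∂sphMeasure n := by
  refine h.poincare (F := fun y ↦ G (gradient H y)) (v := fun y ↦ gradient G (gradient H y))
    (fun x hx ↦ ?_) (h.continuous_gradient_comp_gradient_sphere hG)
  have hx0 := ne_zero_of_mem_sphere_zero_one hx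
  have hGx := hG _ (h.gradient_ne_zero hx0)
  exact h.hasStrictFDerivAt_comp_gradient hx0 (hGx.hasStrictFDerivAt'
    (hGx.differentiableAt one_ne_zero).hasGradientAt.hasFDerivAt one_ne_zero)

lemma sum_poincare_comp_gradient (h : IsC2PlusSupport n H) {ι : Type*} [Fintype ι]
    {G : ι → Euc n → ℝ} (hG : ∀ i, ∀ p ≠ 0, ContDiffAt ℝ 1 (G i) p) :
    n * ∫ x : sphere (0 : Euc n) 1, volDens n H x * ∑ i, G i (gradient H x) ^ 2 ∂sphMeasure n -
        ∫ x : sphere (0 : Euc n) 1, volDens n H x * (H x * ∑ i,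
          ⟪hessianMap H x (gradient (G i) (gradient H x)), gradient (G i) (gradient H x)⟫)
            ∂sphMeasure n ≤
      n * (∑ i, (∫ x : sphere (0 : Euc n) 1,
          volDens n H x * G i (gradient H x) ∂sphMeasure n) ^ 2) /
        ∫ x : sphere (0 : Euc n) 1, volDens n H x ∂sphMeasure n := by
  have hD := h.continuous_volDens_sphere
  have hG_sq_int (i) := integrable_sphMeasure_of_continuous (hD.fun_mul
    ((h.continuous_comp_gradient_sphere fun p hp ↦ (hG i p hp).continuousAt).fun_pow 2))
  have henergy_int (i) := integrable_sphMeasure_of_continuous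
    (hD.fun_mul (h.continuous_mul_inner_hessianMap_self
      (v := fun y ↦ gradient (G i) (gradient H y))
      (h.continuous_gradient_comp_gradient_sphere (hG i))))
  simp_rw [Finset.mul_sum]
  rw [integral_finsetSum _ fun i _ ↦ hG_sq_int i, integral_finsetSum _ fun i _ ↦ henergy_int i,
    Finset.mul_sum, ← Finset.sum_sub_distrib, Finset.sum_div]
  exact Finset.sum_le_sum fun i _ ↦ h.poincare_comp_gradient (hG i)

lemma sum_inner_hessianMap_gradient_radial (h : IsC2PlusSupport n H)
    (hφ : ContDiffOn ℝ 1 φ (Set.Ioi 0)) (hx : x ≠ 0) {ι : Type*} [Fintype ι]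
    (b : OrthonormalBasis ι ℝ (Euc n)) :
    ∑ i, ⟪hessianMap H x (gradient (fun p ↦ φ ‖p‖ * ⟪b i, p⟫) (gradient H x)),
        gradient (fun p ↦ φ ‖p‖ * ⟪b i, p⟫) (gradient H x)⟫ = radialEnergy n H φ x := by
  have hX := h.gradient_ne_zero hx
  have hφ' := (hφ.contDiffAt (Ioi_mem_nhds (norm_pos_iff.2 hX))).hasStrictDerivAt one_ne_zero
  have hgradient (i : ι) : gradient (fun p ↦ φ ‖p‖ * ⟪b i, p⟫) (gradient H x) = _ :=
    HasGradientAt.gradient (hasStrictFDerivAt_comp_norm_mul_inner hX hφ' (b i)).hasFDerivAt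
  simp_rw [hgradient]
  exact sum_inner_map_inner_smul_add_smul b (hessianMap H x) _ _ _

lemma poincare_radial (h : IsC2PlusSupport n H) (hφ : ContDiffOn ℝ 1 φ (Set.Ioi 0)) :
    n * ∫ x : sphere (0 : Euc n) 1,
          volDens n H x * (φ ‖gradient H x‖ ^ 2 * ‖gradient H x‖ ^ 2) ∂sphMeasure n -
        ∫ x : sphere (0 : Euc n) 1, volDens n H x * (H x * radialEnergy n H φ x) ∂sphMeasure n ≤
      n * ‖∫ x : sphere (0 : Euc n) 1,
          volDens n H x • (φ ‖gradient H x‖ • gradient H x) ∂sphMeasure n‖ ^ 2 /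
        ∫ x : sphere (0 : Euc n) 1, volDens n H x ∂sphMeasure n := by
  let b := EuclideanSpace.basisFun (Fin (n + 1)) ℝ
  have hpoincare := h.sum_poincare_comp_gradient (G := fun i p ↦ φ ‖p‖ * ⟪b i, p⟫) fun i p hp ↦
    (contDiffAt_comp_norm hφ hp).mul (innerSL ℝ (b i)).contDiff.contDiffAt
  have hX_int : Integrable (fun x : sphere (0 : Euc n) 1 ↦
      volDens n H x • (φ ‖gradient H x‖ • gradient H x)) (sphMeasure n) :=
    integrable_sphMeasure_of_continuous (h.continuous_volDens_sphere.smul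
      ((h.continuous_comp_gradient_sphere fun p hp ↦
        (contDiffAt_comp_norm hφ hp).continuousAt).smul h.continuous_gradient_sphere))
  have hmean : ∑ i, (∫ x : sphere (0 : Euc n) 1,
        volDens n H x * (φ ‖gradient H x‖ * ⟪b i, gradient H x⟫) ∂sphMeasure n) ^ 2 =
      ‖∫ x : sphere (0 : Euc n) 1,
        volDens n H x • (φ ‖gradient H x‖ • gradient H x) ∂sphMeasure n‖ ^ 2 := by
    simp_rw [← b.sum_sq_inner_right, ← integral_inner hX_int, real_inner_smul_right]
  have henergy (x : sphere (0 : Euc n) 1) := h.sum_inner_hessianMap_gradient_radial hφ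
    (ne_zero_of_mem_sphere_zero_one x.2) b
  simpa only [sum_radial_mul_inner_sq, hmean, henergy] using hpoincare

lemma continuous_radialEnergy_sphere (h : IsC2PlusSupport n H)
    (hφ : ContDiffOn ℝ 1 φ (Set.Ioi 0)) :
    Continuous fun x : sphere (0 : Euc n) 1 ↦ radialEnergy n H φ x := by
  let b := EuclideanSpace.basisFun (Fin (n + 1)) ℝ
  simp_rw [← fun x : sphere (0 : Euc n) 1 ↦ h.sum_inner_hessianMap_gradient_radial hφ
    (ne_zero_of_mem_sphere_zero_one x.2) b]
  have hgradient (i) := h.continuous_gradient_comp_gradient_sphere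
    (G := fun p ↦ φ ‖p‖ * ⟪b i, p⟫) fun p hp ↦
      (contDiffAt_comp_norm hφ hp).mul (innerSL ℝ (b i)).contDiff.contDiffAt
  exact continuous_finsetSum _ fun i _ ↦
    (h.continuous_hessianMap_sphere.clm_apply (hgradient i)).inner (hgradient i)

lemma integrand_eq_trace_fderiv_coneVolumeField_add (h : IsC2PlusSupport n H)
    (hH : ContDiffOn ℝ 3 H {0}ᶜ) (hφ : ContDiffOn ℝ 1 φ (Set.Ioi 0))
    (hφpos : ∀ t ∈ Set.Ioi 0, 0 < φ t) (hx : x ∈ sphere (0 : Euc n) 1) :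
    volDens n H x * (φ ‖gradient H x‖ ^ 2 *
        ⟪sphGrad n (logQ n H) x
            - (‖gradient H x‖ * (deriv φ ‖gradient H x‖ / φ ‖gradient H x‖)) ^ 2
                • sphGrad n (fun y ↦ Real.log ‖gradient H y‖) x,
          H x • gradient H x⟫) =
      LinearMap.trace ℝ (Euc n)
          (fderiv ℝ (coneVolumeField n H fun y ↦ φ ‖gradient H y‖ ^ 2) x)
        + (n * (volDens n H x * (φ ‖gradient H x‖ ^ 2 * ‖gradient H x‖ ^ 2))
          - volDens n H x * (H x * radialEnergy n H φ x)) := by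
  have hx0 := ne_zero_of_mem_sphere_zero_one hx
  have hX := h.gradient_ne_zero hx0
  have hr := norm_pos_iff.2 hX
  have hφr := hφpos _ hr
  have hφ' := (hφ.contDiffAt (Ioi_mem_nhds hr)).hasStrictDerivAt one_ne_zero
  have hsq := (h.hasStrictFDerivAt_comp_gradient hx0 (hasStrictFDerivAt_comp_norm hX
    (hφ'.fun_pow 2))).hasFDerivAt
  have hfderiv : fderiv ℝ (fun y ↦ φ ‖gradient H y‖ ^ 2) x (gradient H x) =
      2 * φ ‖gradient H x‖ * deriv φ ‖gradient H x‖ / ‖gradient H x‖ *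
        ⟪hessianMap H x (gradient H x), gradient H x⟫ := by
    rw [show fderiv ℝ (fun y ↦ φ ‖gradient H y‖ ^ 2) x = _ from hsq.fderiv, innerSL_apply_apply,
      map_smul, real_inner_smul_left, Nat.cast_two, pow_one]
  rw [h.trace_fderiv_coneVolumeField hH hsq.differentiableAt hx, hfderiv, radialEnergy,
    inner_sub_left, real_inner_smul_right, real_inner_smul_left, real_inner_smul_right,
    h.inner_sphGrad_log_norm_gradient hx0]
  field_simp
  ring

end IsC2PlusSupport

end RadialWeight

theorem local_BM_inequality_radial_general {n : ℕ} {H : Euc n → ℝ} (h : IsC2PlusSupport n H)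
    (hH : ContDiffOn ℝ 3 H {0}ᶜ) {φ : ℝ → ℝ} (hφ : ContDiffOn ℝ 1 φ (Set.Ioi 0))
    (hφpos : ∀ t ∈ Set.Ioi 0, 0 < φ t) :
    ∫ x : sphere (0 : Euc n) 1,
        volDens n H x * (φ ‖gradient H x‖ ^ 2 *
          ⟪sphGrad n (logQ n H) x
              - (‖gradient H x‖ * (deriv φ ‖gradient H x‖ / φ ‖gradient H x‖)) ^ 2
                  • sphGrad n (fun y ↦ Real.log ‖gradient H y‖) x,
            H x • gradient H x⟫) ∂sphMeasure n ≤
      n * ‖∫ x : sphere (0 : Euc n) 1,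
            volDens n H x • (φ ‖gradient H x‖ • gradient H x) ∂sphMeasure n‖ ^ 2 /
        ∫ x : sphere (0 : Euc n) 1, volDens n H x ∂sphMeasure n := by
  have hu : ∀ y ≠ 0, ContDiffAt ℝ 1 (fun z ↦ φ ‖gradient H z‖ ^ 2) y := fun y hy ↦
    (h.contDiffAt_comp_norm_gradient hφ hy).pow 2
  have hu_smul (c : ℝ) (hc : 0 < c) (y : Euc n) :
      φ ‖gradient H (c • y)‖ ^ 2 = φ ‖gradient H y‖ ^ 2 := by rw [h.gradient_smul hc]
  have hsq_int := integrable_sphMeasure_of_continuous (h.continuous_volDens_sphere.fun_mul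
    (h.continuous_comp_gradient_sphere (G := fun p ↦ φ ‖p‖ ^ 2 * ‖p‖ ^ 2) fun p hp ↦
      ((contDiffAt_comp_norm hφ hp).continuousAt.pow 2).mul (continuous_norm.continuousAt.pow 2)))
  have henergy_int := integrable_sphMeasure_of_continuous (h.continuous_volDens_sphere.fun_mul
    (h.continuous_sphere.fun_mul (h.continuous_radialEnergy_sphere hφ)))
  calc
    _ = ∫ x : sphere (0 : Euc n) 1, LinearMap.trace ℝ (Euc n)
            (fderiv ℝ (coneVolumeField n H fun y ↦ φ ‖gradient H y‖ ^ 2) x) ∂sphMeasure n +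
          ∫ x : sphere (0 : Euc n) 1,
            (n * (volDens n H x * (φ ‖gradient H x‖ ^ 2 * ‖gradient H x‖ ^ 2))
              - volDens n H x * (H x * radialEnergy n H φ x)) ∂sphMeasure n :=
        (integral_congr_ae (.of_forall fun x ↦
          h.integrand_eq_trace_fderiv_coneVolumeField_add hH hφ hφpos x.2)).trans
          (integral_add (integrable_sphMeasure_of_continuous
            (h.continuous_trace_fderiv_coneVolumeField hH hu))
            ((hsq_int.const_mul _).sub henergy_int))
    _ = n * ∫ x : sphere (0 : Euc n) 1,
            volDens n H x * (φ ‖gradient H x‖ ^ 2 * ‖gradient H x‖ ^ 2) ∂sphMeasure n -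
          ∫ x : sphere (0 : Euc n) 1,
            volDens n H x * (H x * radialEnergy n H φ x) ∂sphMeasure n := by
        rw [h.integral_trace_fderiv_coneVolumeField hH hu hu_smul, zero_add,
          integral_sub (hsq_int.const_mul _) henergy_int, integral_const_mul]
    _ ≤ _ := h.poincare_radial hφ

/-- For a smooth, strictly convex body `K ⊂ ℝ^{n+1}` with the origin in its
interior, radial function `r = |X|`, and `f = φ(r)` with `φ : (0,∞) → (0,∞)` of class `C¹`:
`∫ f² ⟨∇̄ log(h^{n+2}/𝒦) − (r (log φ)'(r))² ∇̄ log r, hX⟩ dV ≤ n |∫ f X dV|² / ∫ dV`. -/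
theorem local_BM_inequality_radial
    (n : ℕ) (hn : 2 ≤ n)
    (H : Euc n → ℝ) (K : Set (Euc n))
    (hK : K = {y : Euc n | ∀ x : Euc n, ⟪x, y⟫ ≤ H x})
    (hhomog : ∀ c : ℝ, 0 < c → ∀ x : Euc n, H (c • x) = c * H x)
    (hconv : ConvexOn ℝ Set.univ H)
    (hsmooth : ContDiffOn ℝ (⊤ : ℕ∞) H {(0 : Euc n)}ᶜ)
    (hpos : ∀ x ∈ sphere (0 : Euc n) 1, 0 < H x)
    (hposdef : ∀ x ∈ sphere (0 : Euc n) 1, (bmat n H x).PosDef)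
    (φ : ℝ → ℝ)
    (hφ : ContDiffOn ℝ 1 φ (Set.Ioi (0 : ℝ)))
    (hφpos : ∀ t ∈ Set.Ioi (0 : ℝ), 0 < φ t) :
    (∫ x : sphere (0 : Euc n) 1,
        volDens n H x * ((φ ‖gradient H x‖) ^ 2 *
          ⟪sphGrad n (logQ n H) x
              - (‖gradient H x‖ * (deriv φ ‖gradient H x‖ / φ ‖gradient H x‖)) ^ 2
                  • sphGrad n (fun y => Real.log ‖gradient H y‖) x,
            H x • gradient H x⟫)
        ∂(sphMeasure n))
      ≤ (n : ℝ) * ‖∫ x : sphere (0 : Euc n) 1,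
            volDens n H x • (φ ‖gradient H x‖ • gradient H x) ∂(sphMeasure n)‖ ^ 2
          / ∫ x : sphere (0 : Euc n) 1, volDens n H x ∂(sphMeasure n) := by
  exact local_BM_inequality_radial_general
    ⟨hhomog, hconv, contDiffOn_infty.1 hsmooth 2, hpos, hposdef⟩
    (contDiffOn_infty.1 hsmooth 3) hφ hφpos
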